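/- arXiv:2206.09204 — 2 statements merged into one kernel-verified Lean document; each statement's English description precedes it below -/
import Mathlib

section
/- Let u_1, …, u_d be unit vectors in ℝ^m, let g be drawn from the standard Gaussian measure N(0, I_m) on ℝ^m, let w ∈ ℝ^d have nonnegative entries with W = Σ_{j=1}^d w_j, and let ε > 0. Define the random variable Z = Σ_{j=1}^{d} w_j · 1(⟨u_j, g⟩ ≤ −3ε). Then E[(Z − W/2)²] ≥ (1/(2π)) · Σ_{j,k=1}^{d} w_j w_k · arcsin(⟨u_j, u_k⟩) − (3/√(2π)) · ε · W². -/
open MeasureTheory ProbabilityTheory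

/-!
Expanding the square reduces the claim to pairs `X = ⟨u_j, g⟩`, `Y = ⟨u_k, g⟩` of standard normals.
At threshold `0` the pair contributes exactly `arcsin ⟨u_j, u_k⟩ / (2π)`, by Sheppard's formula
`P(X < 0, Y < 0) = 1/4 + arcsin(cov(X, Y)) / (2π)`: the law of `(X, Y)` is that of
`(x, sin θ x + cos θ y)` with `x, y` independent and `sin θ = cov(X, Y)`, so the quadrant becomes a
planar wedge of opening `π/2 + θ`, and the polar angle of `(x, y)` is uniform. Moving the threshold
from `0` to `-t` loses at most the strips `-t < X < 0` and `-t < Y < 0`, each of mass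
`p ≤ t / √(2π)`: the joint probability drops by at most `2p`, while each marginal drops by exactly
`p` and enters with weight `-1/2`, so the net loss is at most `p`.
-/

open Set
open scoped ENNReal NNReal Real

lemma measurable_polarCoord_snd : Measurable fun p : ℝ × ℝ ↦ (polarCoord p).2 :=
  Complex.measurable_arg.comp Complex.measurableEquivRealProd.symm.measurable

lemma map_polarCoord_snd_withDensity {g : ℝ → ℝ≥0∞} (hg : Measurable g) :
    (volume.withDensity fun p : ℝ × ℝ ↦ g (p.1 ^ 2 + p.2 ^ 2)).map (fun p ↦ (polarCoord p).2) =
      (∫⁻ r in Ioi (0 : ℝ), ENNReal.ofReal r * g (r ^ 2)) • volume.restrict (Ioo (-π) π) := by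
  refine Measure.ext fun s hs ↦ ?_
  have hs' := measurable_polarCoord_snd hs
  have hpolar : ∀ p ∈ polarCoord.target,
      ENNReal.ofReal p.1 • ((fun q ↦ (polarCoord q).2) ⁻¹' s).indicator
        (fun q : ℝ × ℝ ↦ g (q.1 ^ 2 + q.2 ^ 2)) (polarCoord.symm p) =
      ENNReal.ofReal p.1 * g (p.1 ^ 2) * s.indicator 1 p.2 := by
    intro p hp
    have hangle : polarCoord.symm p ∈ (fun q ↦ (polarCoord q).2) ⁻¹' s ↔ p.2 ∈ s := by
      rw [mem_preimage, polarCoord.right_inv hp]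
    have hnorm : (p.1 * Real.cos p.2) ^ 2 + (p.1 * Real.sin p.2) ^ 2 = p.1 ^ 2 := by
      linear_combination p.1 ^ 2 * Real.sin_sq_add_cos_sq p.2
    by_cases hps : p.2 ∈ s
    · rw [indicator_of_mem (hangle.2 hps), indicator_of_mem hps, polarCoord_symm_apply, hnorm,
        Pi.one_apply, mul_one, smul_eq_mul]
    · rw [indicator_of_notMem (hangle.not.2 hps), indicator_of_notMem hps, smul_zero, mul_zero]
  rw [Measure.map_apply measurable_polarCoord_snd hs, withDensity_apply _ hs',
    ← lintegral_indicator hs', ← lintegral_comp_polarCoord_symm,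
    setLIntegral_congr_fun polarCoord.open_target.measurableSet hpolar, polarCoord_target,
    Measure.volume_eq_prod, ← Measure.prod_restrict,
    lintegral_prod_mul (f := fun r ↦ ENNReal.ofReal r * g (r ^ 2)) (by fun_prop)
      (measurable_one.indicator hs).aemeasurable,
    lintegral_indicator_one hs, Measure.smul_apply, smul_eq_mul]

lemma isUniform_polarCoord_snd {g : ℝ → ℝ≥0∞} (hg : Measurable g)
    [IsProbabilityMeasure (volume.withDensity fun p : ℝ × ℝ ↦ g (p.1 ^ 2 + p.2 ^ 2))] :
    pdf.IsUniform (fun p : ℝ × ℝ ↦ (polarCoord p).2) (Ioo (-π) π)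
      (volume.withDensity fun p ↦ g (p.1 ^ 2 + p.2 ^ 2)) := by
  have hmap := map_polarCoord_snd_withDensity hg
  have := Measure.isProbabilityMeasure_map
    (μ := volume.withDensity fun p : ℝ × ℝ ↦ g (p.1 ^ 2 + p.2 ^ 2))
    measurable_polarCoord_snd.aemeasurable
  -- Total mass one fixes the radial constant, so the radial integral is never computed.
  have hmass := congrArg (· univ) hmap
  simp only [measure_univ, Measure.smul_apply, Measure.restrict_apply_univ, smul_eq_mul] at hmass
  rw [pdf.IsUniform, ProbabilityTheory.cond, hmap, ENNReal.eq_inv_of_mul_eq_one_left hmass.symm]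

lemma gaussianReal_prod_gaussianReal_eq_withDensity {v : ℝ≥0} (hv : v ≠ 0) :
    (gaussianReal 0 v).prod (gaussianReal 0 v) = volume.withDensity fun p : ℝ × ℝ ↦
      ENNReal.ofReal ((2 * π * v)⁻¹ * Real.exp (-(p.1 ^ 2 + p.2 ^ 2) / (2 * v))) := by
  rw [gaussianReal_of_var_ne_zero _ hv,
    prod_withDensity (measurable_gaussianPDF _ _) (measurable_gaussianPDF _ _),
    ← Measure.volume_eq_prod]
  congr with p
  have hsqrt : (√(2 * π * v))⁻¹ * (√(2 * π * v))⁻¹ = (2 * π * v)⁻¹ := by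
    rw [← mul_inv, Real.mul_self_sqrt (by positivity)]
  rw [gaussianPDF, gaussianPDF, ← ENNReal.ofReal_mul (gaussianPDFReal_nonneg _ _ _)]
  congr 1
  rw [gaussianPDFReal, gaussianPDFReal, ← hsqrt, neg_add, add_div, Real.exp_add, sub_zero,
    sub_zero]
  ring

lemma isUniform_polarCoord_snd_gaussianReal {v : ℝ≥0} (hv : v ≠ 0) :
    pdf.IsUniform (fun p : ℝ × ℝ ↦ (polarCoord p).2) (Ioo (-π) π)
      ((gaussianReal 0 v).prod (gaussianReal 0 v)) := by
  have hdensity := gaussianReal_prod_gaussianReal_eq_withDensity hv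
  have : IsProbabilityMeasure (volume.withDensity fun p : ℝ × ℝ ↦
      ENNReal.ofReal ((2 * π * v)⁻¹ * Real.exp (-(p.1 ^ 2 + p.2 ^ 2) / (2 * v)))) :=
    hdensity ▸ inferInstance
  rw [hdensity]
  exact isUniform_polarCoord_snd
    (g := fun t ↦ ENNReal.ofReal ((2 * π * v)⁻¹ * Real.exp (-t / (2 * v)))) (by fun_prop)

lemma polarCoord_symm_mem_wedge_iff {θ : ℝ} (hθ : θ ∈ Icc (-(π / 2)) (π / 2)) {r φ : ℝ}
    (hr : 0 < r) (hφ : φ ∈ Ioo (-π) π) :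
    polarCoord.symm (r, φ) ∈ {p : ℝ × ℝ | 0 < p.1 ∧ 0 < Real.sin θ * p.1 + Real.cos θ * p.2} ↔
      φ ∈ Ioo (-θ) (π / 2) := by
  have hsin : Real.sin θ * (r * Real.cos φ) + Real.cos θ * (r * Real.sin φ) =
      r * Real.sin (φ + θ) := by
    rw [Real.sin_add]; ring
  simp only [polarCoord_symm_apply, mem_ofPred_eq, hsin, mul_pos_iff_of_pos_left hr]
  obtain ⟨hθ₁, hθ₂⟩ := hθ
  obtain ⟨hφ₁, hφ₂⟩ := hφ
  constructor
  · rintro ⟨hcos, hsinpos⟩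
    have habs : |φ| < π / 2 := by
      by_contra! h
      have := Real.cos_nonpos_of_pi_div_two_le_of_le h
        (by linarith [abs_lt.2 ⟨hφ₁, hφ₂⟩, Real.pi_pos])
      exact hcos.not_ge (Real.cos_abs φ ▸ this)
    obtain ⟨hφ₃, hφ₄⟩ := abs_lt.1 habs
    refine ⟨?_, hφ₄⟩
    by_contra! h
    exact hsinpos.not_ge (Real.sin_nonpos_of_nonpos_of_neg_pi_le (by linarith) (by linarith))
  · rintro ⟨h₁, h₂⟩
    exact ⟨Real.cos_pos_of_mem_Ioo ⟨by linarith, h₂⟩,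
      Real.sin_pos_of_pos_of_lt_pi (by linarith) (by linarith)⟩

lemma measureReal_wedge {μ : Measure (ℝ × ℝ)} (hμ : μ ≪ volume)
    (hangle : pdf.IsUniform (fun p : ℝ × ℝ ↦ (polarCoord p).2) (Ioo (-π) π) μ)
    {θ : ℝ} (hθ : θ ∈ Icc (-(π / 2)) (π / 2)) :
    μ.real {p | 0 < p.1 ∧ 0 < Real.sin θ * p.1 + Real.cos θ * p.2} = 1 / 4 + θ / (2 * π) := by
  have hwedge : {p : ℝ × ℝ | 0 < p.1 ∧ 0 < Real.sin θ * p.1 + Real.cos θ * p.2} =ᵐ[μ]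
      (fun p ↦ (polarCoord p).2) ⁻¹' Ioo (-θ) (π / 2) := by
    filter_upwards [hμ.ae_le polarCoord_source_ae_eq_univ] with p hp
    have hp : p ∈ polarCoord.source := hp.mpr trivial
    have htarget := polarCoord.map_source hp
    rw [polarCoord_target] at htarget
    have := polarCoord_symm_mem_wedge_iff hθ htarget.1 htarget.2
    rw [Prod.mk.eta, polarCoord.left_inv hp] at this
    exact propext this
  have hvolume : volume (Ioo (-π) π) = ENNReal.ofReal (2 * π) := by
    rw [Real.volume_Ioo]; ring_nf
  have hsubset : Ioo (-θ) (π / 2) ⊆ Ioo (-π) π :=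
    Ioo_subset_Ioo (by linarith [hθ.2, Real.pi_pos]) (by linarith [Real.pi_pos])
  rw [measureReal_congr hwedge, measureReal_def,
    hangle.measure_preimage (by simp [hvolume, Real.pi_pos])
      (by rw [hvolume]; exact ENNReal.ofReal_ne_top) measurableSet_Ioo,
    inter_eq_right.2 hsubset, hvolume, Real.volume_Ioo, ENNReal.toReal_div,
    ENNReal.toReal_ofReal (by linarith [hθ.1]), ENNReal.toReal_ofReal (by positivity)]
  field_simp
  ring

section GaussianPair

variable {Ω Ω' : Type*} {mΩ : MeasurableSpace Ω} {mΩ' : MeasurableSpace Ω'}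
  {P : Measure Ω} {P' : Measure Ω'} {X Y : Ω → ℝ} {X' Y' : Ω' → ℝ}

lemma strongDual_prod_apply (L : StrongDual ℝ (ℝ × ℝ)) (x y : ℝ) :
    L (x, y) = L (1, 0) * x + L (0, 1) * y := by
  have : ((x, y) : ℝ × ℝ) = x • (1, 0) + y • (0, 1) := by simp
  rw [this, map_add, map_smul, map_smul, smul_eq_mul, smul_eq_mul, mul_comm x, mul_comm y]

lemma integral_const_mul_add_const_mul (hX : Integrable X P) (hY : Integrable Y P) (a b : ℝ) :
    ∫ ω, a * X ω + b * Y ω ∂P = a * P[X] + b * P[Y] := by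
  rw [integral_add (hX.const_mul a) (hY.const_mul b), integral_const_mul, integral_const_mul]

lemma variance_const_mul_add_const_mul [IsFiniteMeasure P] (hX : MemLp X 2 P) (hY : MemLp Y 2 P)
    (a b : ℝ) :
    Var[fun ω ↦ a * X ω + b * Y ω; P] =
      a ^ 2 * Var[X; P] + 2 * (a * b * cov[X, Y; P]) + b ^ 2 * Var[Y; P] := by
  rw [variance_fun_add (hX.const_mul a) (hY.const_mul b), variance_const_mul, variance_const_mul,
    covariance_const_mul_left, covariance_const_mul_right]
  ring

lemma charFunDual_map_prodMk (hXY : HasGaussianLaw (fun ω ↦ (X ω, Y ω)) P)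
    (L : StrongDual ℝ (ℝ × ℝ)) :
    charFunDual (P.map fun ω ↦ (X ω, Y ω)) L =
      Complex.exp ((L (1, 0) * P[X] + L (0, 1) * P[Y] : ℝ) * Complex.I -
        (L (1, 0) ^ 2 * Var[X; P] + 2 * (L (1, 0) * L (0, 1) * cov[X, Y; P]) +
          L (0, 1) ^ 2 * Var[Y; P] : ℝ) / 2) := by
  have := hXY.isProbabilityMeasure
  simp_rw [hXY.charFunDual_map_eq_fun L, strongDual_prod_apply L (X _) (Y _),
    integral_const_mul_add_const_mul hXY.fst.integrable hXY.snd.integrable,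
    variance_const_mul_add_const_mul hXY.fst.memLp_two hXY.snd.memLp_two]

lemma identDistrib_prodMk_of_hasGaussianLaw (hXY : HasGaussianLaw (fun ω ↦ (X ω, Y ω)) P)
    (hXY' : HasGaussianLaw (fun ω ↦ (X' ω, Y' ω)) P') (hX : P[X] = P'[X']) (hY : P[Y] = P'[Y'])
    (hXvar : Var[X; P] = Var[X'; P']) (hYvar : Var[Y; P] = Var[Y'; P'])
    (hcov : cov[X, Y; P] = cov[X', Y'; P']) :
    IdentDistrib (fun ω ↦ (X ω, Y ω)) (fun ω ↦ (X' ω, Y' ω)) P P' where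
  aemeasurable_fst := hXY.aemeasurable
  aemeasurable_snd := hXY'.aemeasurable
  map_eq := by
    have := hXY.isProbabilityMeasure
    have := hXY'.isProbabilityMeasure
    have := hXY.isGaussian_map
    have := hXY'.isGaussian_map
    refine Measure.ext_of_charFunDual (funext fun L ↦ ?_)
    rw [charFunDual_map_prodMk hXY, charFunDual_map_prodMk hXY', hX, hY, hXvar, hYvar, hcov]

lemma two_mul_abs_covariance_le [IsFiniteMeasure P] (hX : MemLp X 2 P) (hY : MemLp Y 2 P) :
    2 * |cov[X, Y; P]| ≤ Var[X; P] + Var[Y; P] := by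
  have hadd := variance_nonneg (X + Y) P
  have hsub := variance_nonneg (X - Y) P
  rw [variance_add hX hY] at hadd
  rw [variance_sub hX hY] at hsub
  cases abs_cases cov[X, Y; P] <;> linarith

lemma identDistrib_gaussianReal_prod_gaussianReal (hX : HasLaw X (gaussianReal 0 1) P)
    (hY : HasLaw Y (gaussianReal 0 1) P) (hXY : HasGaussianLaw (fun ω ↦ (X ω, Y ω)) P) {a b : ℝ}
    (hcov : cov[X, Y; P] = a) (hab : a ^ 2 + b ^ 2 = 1) :
    IdentDistrib (fun ω ↦ (X ω, Y ω)) (fun p : ℝ × ℝ ↦ (p.1, a * p.1 + b * p.2)) P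
      ((gaussianReal 0 1).prod (gaussianReal 0 1)) := by
  set γ := gaussianReal 0 1
  have hfst : HasLaw Prod.fst γ (γ.prod γ) := measurePreserving_fst.hasLaw
  have hsnd : HasLaw Prod.snd γ (γ.prod γ) := measurePreserving_snd.hasLaw
  have hid : MemLp id 2 γ := memLp_id_gaussianReal 2
  have hfst₂ : MemLp Prod.fst 2 (γ.prod γ) := hid.comp_fst γ
  have hsnd₂ : MemLp Prod.snd 2 (γ.prod γ) := hid.comp_snd γ
  have hindep : cov[Prod.fst, Prod.snd; γ.prod γ] = 0 := covariance_fst_snd_prod hid hid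
  have hmean : ∫ x, x ∂γ = 0 := integral_id_gaussianReal
  have hvar : Var[id; γ] = 1 := by simp [γ, variance_id_gaussianReal]
  refine identDistrib_prodMk_of_hasGaussianLaw hXY
    (IsGaussian.hasGaussianLaw_id.map_fun
      ((ContinuousLinearMap.fst ℝ ℝ ℝ).prod
        (a • ContinuousLinearMap.fst ℝ ℝ ℝ + b • ContinuousLinearMap.snd ℝ ℝ ℝ)))
    (hX.integral_eq.trans hfst.integral_eq.symm) ?_ (hX.variance_eq.trans hfst.variance_eq.symm)
    ?_ ?_
  · rw [integral_const_mul_add_const_mul (hfst₂.integrable one_le_two)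
      (hsnd₂.integrable one_le_two), hY.integral_eq, hfst.integral_eq, hsnd.integral_eq,
      hmean, mul_zero, mul_zero, add_zero]
  · rw [variance_const_mul_add_const_mul hfst₂ hsnd₂, hY.variance_eq, hfst.variance_eq,
      hsnd.variance_eq, hindep, hvar]
    linear_combination -hab
  · have hadd := covariance_add_right hfst₂ (hfst₂.const_mul a) (hsnd₂.const_mul b)
    rw [covariance_const_mul_right, covariance_const_mul_right, hindep,
      covariance_self hfst₂.aemeasurable, hfst.variance_eq, hvar, mul_one, mul_zero,
      add_zero] at hadd
    exact hcov.trans hadd.symm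

lemma measureReal_pos_and_pos_of_hasGaussianLaw (hX : HasLaw X (gaussianReal 0 1) P)
    (hY : HasLaw Y (gaussianReal 0 1) P) (hXY : HasGaussianLaw (fun ω ↦ (X ω, Y ω)) P) :
    P.real {ω | 0 < X ω ∧ 0 < Y ω} = 1 / 4 + Real.arcsin cov[X, Y; P] / (2 * π) := by
  have := hXY.isProbabilityMeasure
  set θ := Real.arcsin cov[X, Y; P]
  have hcov : |cov[X, Y; P]| ≤ 1 := by
    have hle := two_mul_abs_covariance_le hXY.fst.memLp_two hXY.snd.memLp_two
    rw [hX.variance_eq, hY.variance_eq, variance_id_gaussianReal, NNReal.coe_one] at hle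
    linarith
  have hsin : cov[X, Y; P] = Real.sin θ :=
    (Real.sin_arcsin (abs_le.1 hcov).1 (abs_le.1 hcov).2).symm
  have hident := identDistrib_gaussianReal_prod_gaussianReal hX hY hXY hsin
    (Real.sin_sq_add_cos_sq θ)
  have hquadrant : MeasurableSet {p : ℝ × ℝ | 0 < p.1 ∧ 0 < p.2} :=
    measurableSet_Ioi.prod measurableSet_Ioi
  have hac : (gaussianReal 0 1).prod (gaussianReal 0 1) ≪ volume := by
    rw [gaussianReal_prod_gaussianReal_eq_withDensity one_ne_zero]
    exact withDensity_absolutelyContinuous _ _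
  exact (congrArg ENNReal.toReal (hident.measure_mem_eq hquadrant)).trans
    (measureReal_wedge hac (isUniform_polarCoord_snd_gaussianReal one_ne_zero)
      (Real.arcsin_mem_Icc _))

lemma measureReal_neg_and_neg_of_hasGaussianLaw (hX : HasLaw X (gaussianReal 0 1) P)
    (hY : HasLaw Y (gaussianReal 0 1) P) (hXY : HasGaussianLaw (fun ω ↦ (X ω, Y ω)) P) :
    P.real {ω | X ω < 0 ∧ Y ω < 0} = 1 / 4 + Real.arcsin cov[X, Y; P] / (2 * π) := by
  have hneg := measureReal_pos_and_pos_of_hasGaussianLaw (X := -X) (Y := -Y)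
    (by simpa using gaussianReal_neg hX) (by simpa using gaussianReal_neg hY) hXY.fun_neg
  simpa [covariance_neg_left, covariance_neg_right] using hneg

end GaussianPair

lemma gaussianReal_apply_le_mul_volume (μ : ℝ) {v : ℝ≥0} (hv : v ≠ 0) (s : Set ℝ) :
    gaussianReal μ v s ≤ ENNReal.ofReal (√(2 * π * v))⁻¹ * volume s := by
  rw [gaussianReal_apply _ hv, ← setLIntegral_const]
  refine lintegral_mono fun x ↦ ENNReal.ofReal_le_ofReal ?_
  exact mul_le_of_le_one_right (by positivity)
    (Real.exp_le_one_iff.2 (div_nonpos_of_nonpos_of_nonneg (by simp [sq_nonneg]) (by positivity)))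

lemma gaussianReal_zero_one_real_Ioo_le {t : ℝ} (ht : 0 ≤ t) :
    (gaussianReal 0 1).real (Ioo (-t) 0) ≤ t / √(2 * π) := by
  refine ENNReal.toReal_le_of_le_ofReal (by positivity)
    ((gaussianReal_apply_le_mul_volume 0 one_ne_zero _).trans_eq ?_)
  rw [Real.volume_Ioo, ← ENNReal.ofReal_mul (by positivity), NNReal.coe_one]
  ring_nf

lemma gaussianReal_zero_one_real_Iio_zero : (gaussianReal 0 1).real (Iio 0) = 1 / 2 := by
  have hquadrant := measureReal_neg_and_neg_of_hasGaussianLaw (X := id) (Y := id)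
    HasLaw.id HasLaw.id (IsGaussian.hasGaussianLaw_id.map_fun
      ((ContinuousLinearMap.id ℝ ℝ).prod (ContinuousLinearMap.id ℝ ℝ)))
  simp only [and_self, covariance_self aemeasurable_id, variance_id_gaussianReal, NNReal.coe_one,
    Real.arcsin_one] at hquadrant
  refine hquadrant.trans ?_
  field_simp
  norm_num

lemma gaussianReal_zero_one_real_Iic_neg {t : ℝ} (ht : 0 < t) :
    (gaussianReal 0 1).real (Iic (-t)) = 1 / 2 - (gaussianReal 0 1).real (Ioo (-t) 0) := by
  rw [← gaussianReal_zero_one_real_Iio_zero, ← Iic_union_Ioo_eq_Iio (neg_lt_zero.2 ht),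
    measureReal_union _ measurableSet_Ioo, add_sub_cancel_right]
  exact (Iic_disjoint_Ioi le_rfl).mono_right Ioo_subset_Ioi_self

section SecondMoment

variable {Ω ι : Type*} {mΩ : MeasurableSpace Ω} {P : Measure Ω}

lemma integral_sq_sum_const_mul [Fintype ι] {f : ι → Ω → ℝ} (hf : ∀ j, MemLp (f j) 2 P)
    (w : ι → ℝ) :
    ∫ ω, (∑ j, w j * f j ω) ^ 2 ∂P = ∑ j, ∑ k, w j * w k * ∫ ω, f j ω * f k ω ∂P := by
  have hexpand (ω : Ω) :
      (∑ j, w j * f j ω) ^ 2 = ∑ j, ∑ k, w j * w k * (f j ω * f k ω) := by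
    rw [sq, Finset.sum_mul_sum]
    exact Finset.sum_congr rfl fun j _ ↦ Finset.sum_congr rfl fun k _ ↦ mul_mul_mul_comm _ _ _ _
  have hterm (j k : ι) : Integrable (fun ω ↦ w j * w k * (f j ω * f k ω)) P :=
    ((hf j).integrable_mul (hf k)).const_mul _
  simp_rw [hexpand, integral_finsetSum _ fun j _ ↦ integrable_finsetSum _ fun k _ ↦ hterm j k,
    integral_finsetSum _ fun k _ ↦ hterm _ k, integral_const_mul]

lemma memLp_indicator_one_sub_const [IsFiniteMeasure P] {A : Set Ω} (hA : NullMeasurableSet A P)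
    (c : ℝ) (p : ℝ≥0∞) : MemLp (fun ω ↦ A.indicator 1 ω - c) p P := by
  refine MemLp.sub (f := A.indicator (1 : Ω → ℝ)) ?_ (memLp_const c)
  exact .of_bound (aestronglyMeasurable_one.indicator₀ hA) ‖(1 : ℝ)‖
    (.of_forall fun ω ↦ norm_indicator_le_norm_self 1 ω)

lemma integral_indicator_one_sub_mul_indicator_one_sub [IsProbabilityMeasure P] {A B : Set Ω}
    (hA : NullMeasurableSet A P) (hB : NullMeasurableSet B P) (c : ℝ) :
    ∫ ω, (A.indicator 1 ω - c) * (B.indicator 1 ω - c) ∂P =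
      P.real (A ∩ B) - c * (P.real A + P.real B) + c ^ 2 := by
  have hintegrable {s : Set Ω} (hs : NullMeasurableSet s P) :
      Integrable (s.indicator (1 : Ω → ℝ)) P := (integrable_const 1).indicator₀ hs
  have hintegral {s : Set Ω} (hs : NullMeasurableSet s P) :
      ∫ ω, s.indicator (1 : Ω → ℝ) ω ∂P = P.real s := by
    simp [integral_indicator₀ hs]
  have hexpand (ω : Ω) : (A.indicator 1 ω - c) * (B.indicator 1 ω - c) =
      (A ∩ B).indicator 1 ω - (c * A.indicator 1 ω + c * B.indicator 1 ω) + c ^ 2 := by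
    rw [inter_indicator_one, Pi.mul_apply]
    ring
  have hAB := hintegrable (hA.inter hB)
  have hcA := (hintegrable hA).const_mul c
  have hcB := (hintegrable hB).const_mul c
  have hsum : Integrable (fun ω ↦ c * A.indicator 1 ω + c * B.indicator 1 ω) P := hcA.add hcB
  have hdiff : Integrable (fun ω ↦ (A ∩ B).indicator 1 ω -
      (c * A.indicator 1 ω + c * B.indicator 1 ω)) P := hAB.sub hsum
  simp_rw [hexpand]
  rw [integral_add hdiff (integrable_const _), integral_sub hAB hsum, integral_add hcA hcB,
    integral_const_mul, integral_const_mul, hintegral hA, hintegral hB, hintegral (hA.inter hB),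
    integral_const, probReal_univ, one_smul, mul_add]

lemma arcsin_covariance_sub_le {X Y : Ω → ℝ} (hX : HasLaw X (gaussianReal 0 1) P)
    (hY : HasLaw Y (gaussianReal 0 1) P) (hXY : HasGaussianLaw (fun ω ↦ (X ω, Y ω)) P) {t : ℝ}
    (ht : 0 < t) :
    Real.arcsin cov[X, Y; P] / (2 * π) - t / √(2 * π) ≤
      P.real ({ω | X ω ≤ -t} ∩ {ω | Y ω ≤ -t}) -
        1 / 2 * (P.real {ω | X ω ≤ -t} + P.real {ω | Y ω ≤ -t}) + (1 / 2) ^ 2 := by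
  have := hXY.isProbabilityMeasure
  have hcover : {ω | X ω < 0 ∧ Y ω < 0} ⊆ ({ω | X ω ≤ -t} ∩ {ω | Y ω ≤ -t}) ∪
      ({ω | X ω ∈ Ioo (-t) 0} ∪ {ω | Y ω ∈ Ioo (-t) 0}) := by
    rintro ω ⟨hXω, hYω⟩
    rcases le_or_gt (X ω) (-t) with hXt | hXt
    · rcases le_or_gt (Y ω) (-t) with hYt | hYt
      · exact .inl ⟨hXt, hYt⟩
      · exact .inr (.inr ⟨hYt, hYω⟩)
    · exact .inr (.inl ⟨hXt, hXω⟩)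
  have hstrip {Z : Ω → ℝ} (hZ : HasLaw Z (gaussianReal 0 1) P) :
      P.real {ω | Z ω ∈ Ioo (-t) 0} = (gaussianReal 0 1).real (Ioo (-t) 0) :=
    hZ.measureReal_eq (p := (· ∈ Ioo (-t) 0)) measurableSet_Ioo
  have htail {Z : Ω → ℝ} (hZ : HasLaw Z (gaussianReal 0 1) P) :
      P.real {ω | Z ω ≤ -t} = 1 / 2 - (gaussianReal 0 1).real (Ioo (-t) 0) :=
    (hZ.measureReal_eq (p := (· ≤ -t)) measurableSet_Iic).trans
      (gaussianReal_zero_one_real_Iic_neg ht)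
  have hquadrant : 1 / 4 + Real.arcsin cov[X, Y; P] / (2 * π) ≤
      P.real ({ω | X ω ≤ -t} ∩ {ω | Y ω ≤ -t}) + 2 * (gaussianReal 0 1).real (Ioo (-t) 0) :=
    calc 1 / 4 + Real.arcsin cov[X, Y; P] / (2 * π)
      _ = P.real {ω | X ω < 0 ∧ Y ω < 0} :=
        (measureReal_neg_and_neg_of_hasGaussianLaw hX hY hXY).symm
      _ ≤ _ := (measureReal_mono (μ := P) hcover).trans (measureReal_union_le _ _)
      _ ≤ _ := add_le_add_right (measureReal_union_le _ _) _
      _ = _ := by rw [hstrip hX, hstrip hY, two_mul]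
  rw [htail hX, htail hY]
  linarith [gaussianReal_zero_one_real_Ioo_le ht.le]

theorem second_moment_indicator_lower_bound_general [Fintype ι] {X : ι → Ω → ℝ}
    (hX : ∀ j, HasLaw (X j) (gaussianReal 0 1) P)
    (hXX : ∀ j k, HasGaussianLaw (fun ω ↦ (X j ω, X k ω)) P)
    {w : ι → ℝ} (hw : ∀ j, 0 ≤ w j) {t : ℝ} (ht : 0 < t) :
    1 / (2 * π) * ∑ j, ∑ k, w j * w k * Real.arcsin cov[X j, X k; P] -
        t / √(2 * π) * (∑ j, w j) ^ 2 ≤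
      ∫ ω, (∑ j, w j * (if X j ω ≤ -t then 1 else 0) - (∑ j, w j) / 2) ^ 2 ∂P := by
  have hP (j : ι) : IsProbabilityMeasure P := (hXX j j).isProbabilityMeasure
  have hmeas (j : ι) : NullMeasurableSet {ω | X j ω ≤ -t} P :=
    nullMeasurableSet_le (hX j).aemeasurable aemeasurable_const
  have hmemLp (j : ι) : MemLp (fun ω ↦ {ω | X j ω ≤ -t}.indicator 1 ω - 1 / 2 : Ω → ℝ) 2 P :=
    have := hP j
    memLp_indicator_one_sub_const (hmeas j) (1 / 2) 2
  have hcenter (ω : Ω) : ∑ j, w j * (if X j ω ≤ -t then 1 else 0) - (∑ j, w j) / 2 =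
      ∑ j, w j * ({ω | X j ω ≤ -t}.indicator 1 ω - 1 / 2) := by
    simp only [indicator_apply, mem_ofPred_eq, Pi.one_apply, mul_sub, Finset.sum_sub_distrib,
      Finset.sum_div, mul_one_div]
  calc
    _ = ∑ j, ∑ k, w j * w k * (Real.arcsin cov[X j, X k; P] / (2 * π) - t / √(2 * π)) := by
      rw [sq, Finset.sum_mul_sum]
      simp only [Finset.mul_sum, ← Finset.sum_sub_distrib]
      exact Finset.sum_congr rfl fun j _ ↦ Finset.sum_congr rfl fun k _ ↦ by ring
    _ ≤ ∑ j, ∑ k, w j * w k * ∫ ω, ({ω | X j ω ≤ -t}.indicator 1 ω - 1 / 2) *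
          ({ω | X k ω ≤ -t}.indicator 1 ω - 1 / 2) ∂P := by
      gcongr with j _ k _
      · exact mul_nonneg (hw j) (hw k)
      · have := hP j
        rw [integral_indicator_one_sub_mul_indicator_one_sub (hmeas j) (hmeas k)]
        exact arcsin_covariance_sub_le (hX j) (hX k) (hXX j k) ht
    _ = _ := by simp_rw [hcenter, integral_sq_sum_const_mul hmemLp]

end SecondMoment

section LinearForms

variable {Ω ι : Type*} [Fintype ι] {mΩ : MeasurableSpace Ω} {P : Measure Ω} {ξ : ι → Ω → ℝ}

lemma covariance_sum_const_mul_of_iIndepFun (hξ : ∀ i, MemLp (ξ i) 2 P) (hindep : iIndepFun ξ P)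
    (u v : ι → ℝ) :
    cov[fun ω ↦ ∑ i, u i * ξ i ω, fun ω ↦ ∑ i, v i * ξ i ω; P] =
      ∑ i, u i * v i * Var[ξ i; P] := by
  have := hindep.isProbabilityMeasure
  rw [covariance_fun_sum_fun_sum (fun i ↦ (hξ i).const_mul (u i)) fun i ↦ (hξ i).const_mul (v i)]
  refine Finset.sum_congr rfl fun i _ ↦ ?_
  have hne (k : ι) (hk : k ≠ i) : cov[ξ i, ξ k; P] = 0 :=
    (hindep.indepFun hk.symm).covariance_eq_zero (hξ i) (hξ k)
  simp_rw [covariance_const_mul_left, covariance_const_mul_right]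
  rw [Fintype.sum_eq_single i fun k hk ↦ by simp [hne k hk], covariance_self (hξ i).aemeasurable,
    mul_assoc]

lemma hasGaussianLaw_prodMk_sum_const_mul (hξ : ∀ i, HasGaussianLaw (ξ i) P)
    (hindep : iIndepFun ξ P) (u v : ι → ℝ) :
    HasGaussianLaw (fun ω ↦ (∑ i, u i * ξ i ω, ∑ i, v i * ξ i ω)) P := by
  let form (a : ι → ℝ) : (ι → ℝ) →L[ℝ] ℝ := ∑ i, a i • ContinuousLinearMap.proj i
  have h := (hindep.hasGaussianLaw hξ).map_fun ((form u).prod (form v))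
  simpa [form] using h

lemma hasLaw_sum_const_mul (hξ : ∀ i, HasLaw (ξ i) (gaussianReal 0 1) P) (hindep : iIndepFun ξ P)
    {u : ι → ℝ} (hu : ∑ i, u i ^ 2 = 1) :
    HasLaw (fun ω ↦ ∑ i, u i * ξ i ω) (gaussianReal 0 1) P := by
  have hgauss :=
    (hasGaussianLaw_prodMk_sum_const_mul (fun i ↦ (hξ i).hasGaussianLaw) hindep u u).fst
  have hmean : ∫ ω, ∑ i, u i * ξ i ω ∂P = 0 := by
    rw [integral_finsetSum _ fun i _ ↦ (hξ i).hasGaussianLaw.integrable.const_mul (u i)]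
    simp only [integral_const_mul, (hξ _).integral_eq, integral_id_gaussianReal, mul_zero,
      Finset.sum_const_zero]
  have hvar : Var[fun ω ↦ ∑ i, u i * ξ i ω; P] = 1 := by
    rw [← covariance_self hgauss.aemeasurable,
      covariance_sum_const_mul_of_iIndepFun (fun i ↦ (hξ i).hasGaussianLaw.memLp_two) hindep]
    simp only [(hξ _).variance_eq, variance_id_gaussianReal, NNReal.coe_one, mul_one, ← sq, hu]
  refine ⟨hgauss.aemeasurable, ?_⟩
  rw [hgauss.map_eq_gaussianReal, hmean, hvar, Real.toNNReal_one]

theorem second_moment_indicator_lower_bound_of_iIndepFun {κ : Type*} [Fintype κ]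
    (hξ : ∀ i, HasLaw (ξ i) (gaussianReal 0 1) P) (hindep : iIndepFun ξ P)
    {u : κ → ι → ℝ} (hu : ∀ j, ∑ i, u j i ^ 2 = 1) {w : κ → ℝ} (hw : ∀ j, 0 ≤ w j)
    {t : ℝ} (ht : 0 < t) :
    1 / (2 * π) * ∑ j, ∑ k, w j * w k * Real.arcsin (∑ i, u j i * u k i) -
        t / √(2 * π) * (∑ j, w j) ^ 2 ≤
      ∫ ω, (∑ j, w j * (if ∑ i, u j i * ξ i ω ≤ -t then 1 else 0) - (∑ j, w j) / 2) ^ 2 ∂P := by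
  have hgauss (i : ι) := (hξ i).hasGaussianLaw
  have hcov (j k : κ) :
      cov[fun ω ↦ ∑ i, u j i * ξ i ω, fun ω ↦ ∑ i, u k i * ξ i ω; P] = ∑ i, u j i * u k i := by
    simp only [covariance_sum_const_mul_of_iIndepFun (fun i ↦ (hgauss i).memLp_two) hindep,
      (hξ _).variance_eq, variance_id_gaussianReal, NNReal.coe_one, mul_one]
  simp_rw [← hcov]
  exact second_moment_indicator_lower_bound_general
    (fun j ↦ hasLaw_sum_const_mul hξ hindep (hu j))
    (fun j k ↦ hasGaussianLaw_prodMk_sum_const_mul hgauss hindep (u j) (u k)) hw ht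

end LinearForms

/-- Second-moment lower bound: for unit vectors `u_1, …, u_d` in `ℝ^m`, a standard Gaussian
`g ~ N(0, I_m)`, nonnegative weights `w` with total weight `W`, and `ε > 0`, the random
variable `Z = Σ_j w_j 1(⟨u_j, g⟩ ≤ -3ε)` satisfies
`E[(Z - W/2)²] ≥ (1/(2π)) Σ_{j,k} w_j w_k arcsin⟨u_j, u_k⟩ - (3/√(2π)) ε W²`. -/
theorem second_moment_indicator_lower_bound (m d : ℕ)
    (u : Fin d → (Fin m → ℝ)) (hu : ∀ j, ∑ i, u j i ^ 2 = 1)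
    (w : Fin d → ℝ) (hw : ∀ j, 0 ≤ w j) (W : ℝ) (hW : W = ∑ j, w j)
    (ε : ℝ) (hε : 0 < ε) :
    (∫ g : Fin m → ℝ,
        ((∑ j, w j * (if (∑ i, u j i * g i) ≤ -(3 * ε) then (1 : ℝ) else 0)) - W / 2) ^ 2
          ∂(Measure.pi fun _ : Fin m => gaussianReal 0 1)) ≥
      (1 / (2 * Real.pi)) * ∑ j, ∑ k, w j * w k * Real.arcsin (∑ i, u j i * u k i) -
        (3 / Real.sqrt (2 * Real.pi)) * ε * W ^ 2 := by
  simpa only [hW, mul_div_right_comm] using second_moment_indicator_lower_bound_of_iIndepFun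
    (fun i ↦ (measurePreserving_eval (fun _ : Fin m ↦ gaussianReal 0 1) i).hasLaw)
    (iIndepFun_pi (X := fun _ ↦ id) fun _ ↦ aemeasurable_id) hu hw (mul_pos three_pos hε)
end

section
/- There exist absolute constants C, c > 0 such that the following holds for every integer d ≥ 2 and ε = 1/(C·d·√(log d)). Let i be a vertex with neighbors j = 1, …, d, let b_{ij} ∈ {−1,+1} and w_{ij} ≥ 0 for each neighbor j, and let W_i = Σ_{j=1}^d w_{ij}. Let v_i, v_1, …, v_d be unit vectors in ℝⁿ such that b_{ij}⟨v_i, v_j⟩ ∈ [ρ*−0.01, ρ*+0.01] for every j, and such that ‖a v_i − a_j v_j‖² + ‖a_j v_j − a_k v_k‖² ≥ ‖a v_i − a_k v_k‖² for every pair j ≠ k and all signs a, a_j, a_k ∈ {−1,+1}. Let g ~ N(0, I_n), set x_i = sgn(⟨g, v_i⟩), let B_i = {j : b_{ij} x_i ⟨g, v_j⟩ ≤ −ε}, and let Δ_i = max(0, 2·Σ_{j∈B_i} w_{ij} − W_i). Then E[Δ_i | |⟨g, v_i⟩| < ε] ≥ c · W_i/(d·√(log d)). -/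
open MeasureTheory ProbabilityTheory

/-- The Goemans–Williamson ratio function `f(ρ) = (1 + (2/π) arcsin ρ)/(1+ρ)`. -/
noncomputable def gwRatio (ρ : ℝ) : ℝ := (1 + 2 / Real.pi * Real.arcsin ρ) / (1 + ρ)

/-!
Replacing `v_j` by `b_{ij} v_j`, all edge signs are `1`. Split each neighbour as
`u_j = ρ_j v + σ_j y_j` with `y_j` a unit vector orthogonal to `v`. Conditioning on
`|⟨g, v⟩| < ε` does not affect the projections `⟨g, y_j⟩`, and the sign of `⟨g, u_j⟩` is that of
`⟨g, y_j⟩` unless `|⟨g, y_j⟩| = O(ε)`. So up to an error `O(ε) W` the local gain is the positive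
part of `-x S`, where `S = ∑ w_j sgn ⟨g, y_j⟩` is symmetric and independent of the sign `x`, and
it has expectation `E|S| / 2`. Moreover `E|S| ≥ E[S²] / W` because `|S| ≤ W`, and
`E[S²] = (2/π) ∑ w_j w_k arcsin ⟨y_j, y_k⟩` by the Sheppard formula.

Expand `arcsin` in its Taylor series, whose coefficients are nonnegative. Entrywise powers of the
Gram matrix of the `y_j` are positive semidefinite by the Schur product theorem, so any set of
degrees gives a lower bound. Each coefficient of degree `≈ k` is of order `k ^ (-3/2)`. The triangle
inequalities and `ρ* ∈ (0, 1)` yield `⟨y_j, y_k⟩ ≥ -(1 - τ)` with `τ` constant, so once the odd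
degree is of order `(log d) / τ` the off-diagonal entries are at least `-1/(2d)` and the quadratic
form is at least `W² / (2d)`. Summing over the degrees of this order gives
`W² / (d √(log d))`.
-/

open scoped RealInnerProductSpace

/-! ### The Taylor series of arcsin -/

theorem choose_half_add_sub_one_eq_centralBinom_div (n : ℕ) :
    Ring.choose ((1 / 2 : ℝ) + n - 1) n = n.centralBinom / 4 ^ n := by
  rw [← Ring.multichoose_eq]
  induction n with
  | zero => simp
  | succ n ih =>
    have hfac := Ring.factorial_nsmul_multichoose_eq_ascPochhammer (1 / 2 : ℝ)
    have hrec : ((n : ℝ) + 1) * Ring.multichoose (1 / 2 : ℝ) (n + 1) =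
        Ring.multichoose (1 / 2 : ℝ) n * (1 / 2 + n) := by
      have h := hfac (n + 1)
      rw [ascPochhammer_succ_right, Polynomial.smeval_mul, ← hfac n] at h
      simp only [Polynomial.smeval_add, Polynomial.smeval_X, Polynomial.smeval_natCast, pow_one,
        pow_zero, nsmul_eq_mul, mul_one, Nat.factorial_succ] at h
      push_cast at h
      refine mul_left_cancel₀ (Nat.cast_ne_zero.2 n.factorial_ne_zero : (n.factorial : ℝ) ≠ 0) ?_
      linear_combination h
    have hbinom : ((n : ℝ) + 1) * (n + 1).centralBinom = 2 * (2 * n + 1) * n.centralBinom := by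
      exact_mod_cast n.succ_mul_centralBinom_succ
    rw [ih] at hrec
    refine mul_left_cancel₀ (Nat.cast_add_one_ne_zero n) (hrec.trans ?_)
    rw [mul_div_assoc', hbinom]
    field_simp
    ring

theorem hasSum_centralBinom_div_mul_pow {x : ℝ} (hx : |x| < 1) :
    HasSum (fun n : ℕ ↦ (n.centralBinom / 4 ^ n : ℝ) * x ^ n) (1 / √(1 - x)) := by
  have h := (Real.one_div_one_sub_rpow_hasFPowerSeriesOnBall_zero (1 / 2)).hasSum (y := x)
    (by simpa [enorm_eq_nnnorm, ← NNReal.coe_lt_coe] using hx)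
  simpa only [FormalMultilinearSeries.ofScalars_apply_eq, smul_eq_mul, zero_add,
    choose_half_add_sub_one_eq_centralBinom_div, ← Real.sqrt_eq_rpow] using h

/-- The coefficient of `x ^ (2 * m + 1)` in the Taylor series of `Real.arcsin` at `0`. -/
noncomputable def arcsinCoeff (m : ℕ) : ℝ := m.centralBinom / 4 ^ m / (2 * m + 1)

theorem arcsinCoeff_nonneg (m : ℕ) : 0 ≤ arcsinCoeff m := by
  unfold arcsinCoeff; positivity

theorem arcsin_eq_integral {x : ℝ} (hx : |x| < 1) :
    Real.arcsin x = ∫ t in (0 : ℝ)..x, 1 / √(1 - t ^ 2) := by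
  have hlt : ∀ t ∈ Set.uIcc 0 x, t ^ 2 < 1 := fun t ht ↦ by
    rw [sq_lt_one_iff_abs_lt_one]
    exact (by simpa using Set.abs_sub_left_of_mem_uIcc ht : |t| ≤ |x|).trans_lt hx
  rw [intervalIntegral.integral_eq_sub_of_hasDerivAt (f := Real.arcsin), Real.arcsin_zero,
    sub_zero]
  · intro t ht
    exact Real.hasDerivAt_arcsin (fun h ↦ by simpa [h] using hlt t ht)
      (fun h ↦ by simpa [h] using hlt t ht)
  · refine ContinuousOn.intervalIntegrable fun t ht ↦ ContinuousAt.continuousWithinAt ?_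
    have : √(1 - t ^ 2) ≠ 0 := (Real.sqrt_pos.2 (sub_pos.2 (hlt t ht))).ne'
    fun_prop (disch := assumption)

theorem hasSum_arcsinCoeff_mul_pow {x : ℝ} (hx : |x| < 1) :
    HasSum (fun m ↦ arcsinCoeff m * x ^ (2 * m + 1)) (Real.arcsin x) := by
  have hx2 : |x ^ 2| < 1 := by simpa using hx
  have hle : ∀ t ∈ Set.uIoc 0 x, |t ^ 2| ≤ |x ^ 2| := fun t ht ↦ by
    have h : |t| ≤ |x| := by
      simpa using Set.abs_sub_left_of_mem_uIcc (Set.uIoc_subset_uIcc ht)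
    simpa only [abs_pow] using pow_le_pow_left₀ (abs_nonneg t) h 2
  have hint : HasSum (fun m ↦ ∫ t in (0 : ℝ)..x, (m.centralBinom / 4 ^ m : ℝ) * (t ^ 2) ^ m)
      (∫ t in (0 : ℝ)..x, 1 / √(1 - t ^ 2)) := by
    refine intervalIntegral.hasSum_integral_of_dominated_convergence
      (fun m _ ↦ (m.centralBinom / 4 ^ m : ℝ) * |x ^ 2| ^ m)
      (fun m ↦ (by fun_prop : Continuous _).aestronglyMeasurable)
      (fun m ↦ .of_forall fun t ht ↦ ?_)
      (.of_forall fun t _ ↦ (hasSum_centralBinom_div_mul_pow (by rwa [abs_abs])).summable)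
      intervalIntegrable_const
      (.of_forall fun t ht ↦ hasSum_centralBinom_div_mul_pow ((hle t ht).trans_lt hx2))
    rw [norm_mul, norm_pow, Real.norm_of_nonneg (by positivity), Real.norm_eq_abs]
    exact mul_le_mul_of_nonneg_left (pow_le_pow_left₀ (abs_nonneg _) (hle t ht) _) (by positivity)
  rw [arcsin_eq_integral hx]
  refine hint.congr_fun fun m ↦ ?_
  simp_rw [← pow_mul]
  rw [intervalIntegral.integral_const_mul, integral_pow, zero_pow (by omega), sub_zero,
    arcsinCoeff]
  push_cast
  ring

theorem one_div_two_mul_sqrt_le_centralBinom_div {n : ℕ} (hn : 1 ≤ n) :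
    1 / (2 * √n) ≤ n.centralBinom / 4 ^ n := by
  have hsq : ((4 : ℝ) ^ n) ^ 2 ≤ 4 * n * n.centralBinom ^ 2 := by
    induction n, hn using Nat.le_induction with
    | base => norm_num [Nat.centralBinom_eq_two_mul_choose]
    | succ n hn ih =>
      have hbinom : ((n : ℝ) + 1) * (n + 1).centralBinom = 2 * (2 * n + 1) * n.centralBinom := by
        exact_mod_cast n.succ_mul_centralBinom_succ
      refine le_of_mul_le_mul_left ?_ (Nat.cast_add_one_pos (α := ℝ) n)
      calc ((n : ℝ) + 1) * ((4 : ℝ) ^ (n + 1)) ^ 2 = 16 * (n + 1) * ((4 : ℝ) ^ n) ^ 2 := by ring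
        _ ≤ 16 * (n + 1) * (4 * n * (n.centralBinom : ℝ) ^ 2) := by gcongr
        _ ≤ 4 * (2 * (2 * n + 1) * (n.centralBinom : ℝ)) ^ 2 := by
          nlinarith [sq_nonneg (n.centralBinom : ℝ)]
        _ = (n + 1) * (4 * ↑(n + 1) * ((n + 1).centralBinom : ℝ) ^ 2) := by
          rw [← hbinom]; push_cast; ring
  have hn' : (0 : ℝ) < n := by exact_mod_cast hn
  rw [div_le_div_iff₀ (by positivity) (by positivity), one_mul]
  refine le_of_sq_le_sq (hsq.trans_eq ?_) (by positivity)
  rw [mul_pow, mul_pow, Real.sq_sqrt hn'.le]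
  ring

theorem one_div_le_sum_Ico_arcsinCoeff {K : ℕ} (hK : 1 ≤ K) :
    1 / (12 * √(2 * K)) ≤ ∑ m ∈ Finset.Ico K (2 * K), arcsinCoeff m := by
  have hK' : (1 : ℝ) ≤ K := by exact_mod_cast hK
  have hterm : ∀ m ∈ Finset.Ico K (2 * K), 1 / (12 * √(2 * K) * K) ≤ arcsinCoeff m := by
    intro m hm
    obtain ⟨hKm, hmK⟩ := Finset.mem_Ico.1 hm
    have hm1 : (1 : ℝ) ≤ m := by exact_mod_cast hK.trans hKm
    have hm2 : (m : ℝ) ≤ 2 * K := by exact_mod_cast hmK.le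
    calc 1 / (12 * √(2 * K) * K) = 1 / (2 * √(2 * K)) / (3 * (2 * K)) := by
          rw [div_div]; ring
      _ ≤ 1 / (2 * √m) / (2 * m + 1) := by gcongr; linarith
      _ ≤ arcsinCoeff m := by
          unfold arcsinCoeff
          exact div_le_div_of_nonneg_right
            (one_div_two_mul_sqrt_le_centralBinom_div (hK.trans hKm)) (by positivity)
  refine (le_of_eq ?_).trans (Finset.card_nsmul_le_sum _ _ _ hterm)
  rw [Nat.card_Ico, show 2 * K - K = K by omega, nsmul_eq_mul]
  field_simp

theorem one_div_le_sum_Ico_ceil_arcsinCoeff {x : ℝ} (hx : 1 ≤ x) :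
    1 / (24 * √x) ≤ ∑ m ∈ Finset.Ico ⌈x⌉₊ (2 * ⌈x⌉₊), arcsinCoeff m := by
  have hceil : (⌈x⌉₊ : ℝ) ≤ 2 * x := by linarith [Nat.ceil_lt_add_one (zero_le_one.trans hx)]
  have hK : 1 ≤ ⌈x⌉₊ := Nat.one_le_ceil_iff.2 (zero_lt_one.trans_le hx)
  refine le_trans ?_ (one_div_le_sum_Ico_arcsinCoeff hK)
  have hsqrt : √(2 * ⌈x⌉₊) ≤ 2 * √x :=
    Real.sqrt_le_iff.2 ⟨by positivity, by rw [mul_pow, Real.sq_sqrt (by positivity)]; linarith⟩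
  calc 1 / (24 * √x) = 1 / (12 * (2 * √x)) := by ring
    _ ≤ 1 / (12 * √(2 * ⌈x⌉₊)) := by gcongr

/-! ### Quadratic forms in the arcsin of a Gram matrix -/

section Quadratic

variable {ι : Type*} {A : Matrix ι ι ℝ}

theorem posSemidef_map_pow [Finite ι] (hA : A.PosSemidef) (p : ℕ) : (A.map (· ^ p)).PosSemidef := by
  induction p with
  | zero =>
    have h : A.map (· ^ 0) = Matrix.gram ℝ (fun _ : ι ↦ (1 : ℝ)) := by ext; simp
    exact h ▸ Matrix.posSemidef_gram ℝ _
  | succ p ih =>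
    have h : A.map (· ^ (p + 1)) = (A.map (· ^ p)).hadamard A := by ext; simp [pow_succ]
    exact h ▸ ih.hadamard hA

variable [Fintype ι]

theorem sum_sum_mul_nonneg_of_posSemidef (hA : A.PosSemidef) (w : ι → ℝ) :
    0 ≤ ∑ j, ∑ k, w j * w k * A j k := by
  refine (hA.dotProduct_mulVec_nonneg w).trans_eq ?_
  simp only [dotProduct, Matrix.mulVec, Pi.star_apply, star_trivial, Finset.mul_sum]
  exact Finset.sum_congr rfl fun j _ ↦ Finset.sum_congr rfl fun k _ ↦ by ring

theorem sum_arcsinCoeff_mul_le_sum_arcsin_of_lt_one (hA : A.PosSemidef) (hA1 : ∀ j k, |A j k| < 1)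
    (w : ι → ℝ) (s : Finset ℕ) :
    ∑ m ∈ s, arcsinCoeff m * ∑ j, ∑ k, w j * w k * A j k ^ (2 * m + 1) ≤
      ∑ j, ∑ k, w j * w k * Real.arcsin (A j k) := by
  have hsum : HasSum (fun m ↦ arcsinCoeff m * ∑ j, ∑ k, w j * w k * A j k ^ (2 * m + 1))
      (∑ j, ∑ k, w j * w k * Real.arcsin (A j k)) := by
    simp_rw [Finset.mul_sum, mul_left_comm (arcsinCoeff _)]
    exact hasSum_sum fun j _ ↦ hasSum_sum fun k _ ↦
      (hasSum_arcsinCoeff_mul_pow (hA1 j k)).mul_left _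
  exact sum_le_hasSum s (fun m _ ↦ mul_nonneg (arcsinCoeff_nonneg m)
    (sum_sum_mul_nonneg_of_posSemidef (posSemidef_map_pow hA (2 * m + 1)) w)) hsum

theorem sum_arcsinCoeff_mul_le_sum_arcsin (hA : A.PosSemidef) (hA1 : ∀ j k, |A j k| ≤ 1)
    (w : ι → ℝ) (s : Finset ℕ) :
    ∑ m ∈ s, arcsinCoeff m * ∑ j, ∑ k, w j * w k * A j k ^ (2 * m + 1) ≤
      ∑ j, ∑ k, w j * w k * Real.arcsin (A j k) := by
  have hscaled : ∀ r ∈ Set.Ioo (0 : ℝ) 1,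
      ∑ m ∈ s, arcsinCoeff m * ∑ j, ∑ k, w j * w k * (r * A j k) ^ (2 * m + 1) ≤
        ∑ j, ∑ k, w j * w k * Real.arcsin (r * A j k) := fun r hr ↦ by
    refine sum_arcsinCoeff_mul_le_sum_arcsin_of_lt_one (hA.smul hr.1.le) (fun j k ↦ ?_) w s
    rw [Matrix.smul_apply, smul_eq_mul, abs_mul, abs_of_pos hr.1]
    exact (mul_le_of_le_one_right hr.1.le (hA1 j k)).trans_lt hr.2
  have hone : (1 : ℝ) ∈ closure (Set.Ioo 0 1) := by simp [closure_Ioo]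
  have h := le_on_closure hscaled (by fun_prop) (by have := Real.continuous_arcsin; fun_prop) hone
  simpa only [one_mul] using h

theorem sq_sum_div_le_sum_mul_mul_pow {w : ι → ℝ} (hw : ∀ j, 0 ≤ w j) (hdiag : ∀ j, A j j = 1)
    {η : ℝ} (hη : ∀ j k, j ≠ k → -η ≤ A j k) {p : ℕ} (hp : Odd p)
    (hηp : η ^ p ≤ 1 / (2 * Fintype.card ι)) :
    (∑ j, w j) ^ 2 / (2 * Fintype.card ι) ≤ ∑ j, ∑ k, w j * w k * A j k ^ p := by
  classical
  have hentry : ∀ j k, (if j = k then 1 else 0) - 1 / (2 * Fintype.card ι) ≤ A j k ^ p := by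
    intro j k
    obtain rfl | hjk := eq_or_ne j k
    · simp [hdiag]
    · have h := hp.strictMono_pow.monotone (hη j k hjk)
      rw [hp.neg_pow] at h
      rw [if_neg hjk]
      linarith
  have hcauchy : (∑ j, w j) ^ 2 / Fintype.card ι ≤ ∑ j, w j ^ 2 := by
    refine div_le_of_le_mul₀ (by positivity) (by positivity) ?_
    simpa [mul_comm] using sq_sum_le_card_mul_sum_sq (s := Finset.univ) (f := w)
  calc (∑ j, w j) ^ 2 / (2 * Fintype.card ι)
      = (∑ j, w j) ^ 2 / Fintype.card ι - (∑ j, w j) ^ 2 * (1 / (2 * Fintype.card ι)) := by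
        ring
    _ ≤ ∑ j, w j ^ 2 - (∑ j, w j) ^ 2 * (1 / (2 * Fintype.card ι)) := by gcongr
    _ = ∑ j, ∑ k, w j * w k * ((if j = k then 1 else 0) - 1 / (2 * Fintype.card ι)) := by
        simp_rw [mul_sub, Finset.sum_sub_distrib, ← Finset.sum_mul, ← Finset.mul_sum, sq,
          Finset.sum_mul, mul_ite, mul_one, mul_zero, Finset.sum_ite_eq, Finset.mem_univ, if_true]
    _ ≤ ∑ j, ∑ k, w j * w k * A j k ^ p := by
        gcongr with j _ k _
        · exact mul_nonneg (hw j) (hw k)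
        · exact hentry j k

theorem half_le_log {d : ℝ} (hd : 2 ≤ d) : 1 / 2 ≤ Real.log d :=
  (by linarith [Real.log_two_gt_d9] : (1 / 2 : ℝ) ≤ Real.log 2).trans
    (Real.log_le_log two_pos hd)

theorem one_sub_pow_le_one_div {d τ : ℝ} (hd : 2 ≤ d) (hτ0 : 0 < τ) (hτ1 : τ ≤ 1) {m : ℕ}
    (hm : Real.log d / τ ≤ m) : (1 - τ) ^ (2 * m + 1) ≤ 1 / (2 * d) := by
  have hlog : Real.log d ≤ τ * m := (div_le_iff₀' hτ0).1 hm
  calc (1 - τ) ^ (2 * m + 1) ≤ Real.exp (-τ) ^ (2 * m + 1) :=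
        pow_le_pow_left₀ (sub_nonneg.2 hτ1) (Real.one_sub_le_exp_neg τ) _
    _ = Real.exp (-(2 * (τ * m) + τ)) := by
        rw [← Real.exp_nat_mul]; push_cast; ring_nf
    _ ≤ Real.exp (-(Real.log d + Real.log 2)) := by
        have := Real.log_le_log two_pos hd
        exact Real.exp_le_exp.2 (by linarith)
    _ = 1 / (2 * d) := by
        rw [← Real.log_mul (by positivity) two_ne_zero, Real.exp_neg,
          Real.exp_log (by positivity), mul_comm, one_div]

variable {E : Type*} [NormedAddCommGroup E] [InnerProductSpace ℝ E]

theorem sq_sum_div_le_sum_mul_arcsin_inner {w : ι → ℝ} {y : ι → E} {τ : ℝ}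
    (hcard : 2 ≤ Fintype.card ι) (hw : ∀ j, 0 ≤ w j) (hy : ∀ j, ‖y j‖ = 1) (hτ0 : 0 < τ)
    (hτ1 : τ ≤ 1 / 2) (hoff : ∀ j k, j ≠ k → -(1 - τ) ≤ ⟪y j, y k⟫) :
    √τ * (∑ j, w j) ^ 2 / (48 * (Fintype.card ι * √(Real.log (Fintype.card ι)))) ≤
      ∑ j, ∑ k, w j * w k * Real.arcsin ⟪y j, y k⟫ := by
  set d := (Fintype.card ι : ℝ)
  have hd : 2 ≤ d := Nat.ofNat_le_cast.2 hcard
  have hlogτ : 1 ≤ Real.log d / τ := (one_le_div hτ0).2 (hτ1.trans (half_le_log hd))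
  set K := ⌈Real.log d / τ⌉₊
  have hinner : ∀ j k, |⟪y j, y k⟫| ≤ 1 := fun j k ↦ by
    simpa [hy] using abs_real_inner_le_norm (y j) (y k)
  calc √τ * (∑ j, w j) ^ 2 / (48 * (d * √(Real.log d)))
      = 1 / (24 * √(Real.log d / τ)) * ((∑ j, w j) ^ 2 / (2 * d)) := by
        rw [Real.sqrt_div' _ hτ0.le]; field_simp; ring
    _ ≤ (∑ m ∈ Finset.Ico K (2 * K), arcsinCoeff m) * ((∑ j, w j) ^ 2 / (2 * d)) := by
        gcongr
        exact one_div_le_sum_Ico_ceil_arcsinCoeff hlogτ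
    _ ≤ ∑ m ∈ Finset.Ico K (2 * K),
          arcsinCoeff m * ∑ j, ∑ k, w j * w k * ⟪y j, y k⟫ ^ (2 * m + 1) := by
        rw [Finset.sum_mul]
        refine Finset.sum_le_sum fun m hm ↦
          mul_le_mul_of_nonneg_left ?_ (arcsinCoeff_nonneg m)
        exact sq_sum_div_le_sum_mul_mul_pow (A := Matrix.gram ℝ y) hw (by simp [hy]) hoff
          (odd_two_mul_add_one m) (one_sub_pow_le_one_div hd hτ0 (by linarith)
            (Nat.ceil_le.1 (Finset.mem_Ico.1 hm).1))
    _ ≤ ∑ j, ∑ k, w j * w k * Real.arcsin ⟪y j, y k⟫ :=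
        sum_arcsinCoeff_mul_le_sum_arcsin (Matrix.posSemidef_gram ℝ y) hinner w _

end Quadratic

section OrthoUnit

variable {E : Type*} [NormedAddCommGroup E] [InnerProductSpace ℝ E] {a b c : E} {τ : ℝ}

/-- The normalised component of the unit vector `b` orthogonal to the unit vector `a`, namely
`(b - ⟪a, b⟫ a) / √(1 - ⟪a, b⟫²)`. It is `0` when `b = ± a`. -/
noncomputable def orthoUnit (a b : E) : E := (√(1 - ⟪a, b⟫ ^ 2))⁻¹ • (b - ⟪a, b⟫ • a)

theorem inner_orthoUnit_right (ha : ‖a‖ = 1) (b : E) : ⟪a, orthoUnit a b⟫ = 0 := by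
  simp [orthoUnit, inner_smul_right, inner_sub_right, ha]

theorem inner_orthoUnit_orthoUnit (ha : ‖a‖ = 1) (b c : E) :
    ⟪orthoUnit a b, orthoUnit a c⟫ =
      (⟪b, c⟫ - ⟪a, b⟫ * ⟪a, c⟫) / (√(1 - ⟪a, b⟫ ^ 2) * √(1 - ⟪a, c⟫ ^ 2)) := by
  simp only [orthoUnit, inner_smul_left, inner_smul_right, inner_sub_left, inner_sub_right,
    real_inner_self_eq_norm_sq, ha, real_inner_comm a b, RCLike.conj_to_real]
  ring

theorem norm_orthoUnit (ha : ‖a‖ = 1) (hb : ‖b‖ = 1) (hab : |⟪a, b⟫| < 1) :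
    ‖orthoUnit a b‖ = 1 := by
  have hpos : 0 < 1 - ⟪a, b⟫ ^ 2 := sub_pos.2 ((sq_lt_one_iff_abs_lt_one _).2 hab)
  rw [norm_eq_sqrt_real_inner, inner_orthoUnit_orthoUnit ha, Real.mul_self_sqrt hpos.le,
    real_inner_self_eq_norm_sq, hb, one_pow, ← sq, div_self hpos.ne', Real.sqrt_one]

theorem inner_smul_add_sqrt_smul_orthoUnit (hab : |⟪a, b⟫| < 1) :
    ⟪a, b⟫ • a + √(1 - ⟪a, b⟫ ^ 2) • orthoUnit a b = b := by
  have hpos : 0 < 1 - ⟪a, b⟫ ^ 2 := sub_pos.2 ((sq_lt_one_iff_abs_lt_one _).2 hab)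
  rw [orthoUnit, smul_inv_smul₀ (Real.sqrt_pos.2 hpos).ne', add_sub_cancel]

theorem inner_add_inner_sub_one_le_inner (ha : ‖a‖ = 1) (hb : ‖b‖ = 1) (hc : ‖c‖ = 1)
    (htri : ‖a + c‖ ^ 2 ≤ ‖a - b‖ ^ 2 + ‖b + c‖ ^ 2) : ⟪a, b⟫ + ⟪a, c⟫ - 1 ≤ ⟪b, c⟫ := by
  rw [norm_add_sq_real, norm_sub_sq_real, norm_add_sq_real, ha, hb, hc] at htri
  linarith

theorem one_sub_le_sqrt_mul_sqrt {ρ : ℝ} (hτρ : τ ≤ ρ) (hρ0 : 0 ≤ ρ) (hρ1 : ρ ≤ 1) :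
    1 - ρ ≤ √(1 - τ) * √(1 - ρ ^ 2) := by
  rw [← Real.sqrt_mul (by linarith)]
  exact Real.le_sqrt_of_sq_le (by nlinarith [mul_nonneg (sub_nonneg.2 hρ1) hρ0])

theorem le_sqrt_one_sub_sq {ρ : ℝ} (hτ : 0 ≤ τ) (hρ : ρ ∈ Set.Icc τ (1 - τ)) :
    τ ≤ √(1 - ρ ^ 2) :=
  Real.le_sqrt_of_sq_le (by nlinarith [hρ.1, hρ.2])

theorem neg_one_sub_le_inner_orthoUnit (ha : ‖a‖ = 1) (hτ : 0 < τ)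
    (hab : ⟪a, b⟫ ∈ Set.Icc τ (1 - τ)) (hac : ⟪a, c⟫ ∈ Set.Icc τ (1 - τ))
    (hbc : ⟪a, b⟫ + ⟪a, c⟫ - 1 ≤ ⟪b, c⟫) :
    -(1 - τ) ≤ ⟪orthoUnit a b, orthoUnit a c⟫ := by
  obtain ⟨hab₀, hab₁⟩ := hab
  obtain ⟨hac₀, hac₁⟩ := hac
  have hσb : 0 < √(1 - ⟪a, b⟫ ^ 2) := Real.sqrt_pos.2 (by nlinarith)
  have hσc : 0 < √(1 - ⟪a, c⟫ ^ 2) := Real.sqrt_pos.2 (by nlinarith)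
  have hprod : (1 - ⟪a, b⟫) * (1 - ⟪a, c⟫) ≤
      (1 - τ) * (√(1 - ⟪a, b⟫ ^ 2) * √(1 - ⟪a, c⟫ ^ 2)) := by
    calc (1 - ⟪a, b⟫) * (1 - ⟪a, c⟫)
        ≤ (√(1 - τ) * √(1 - ⟪a, b⟫ ^ 2)) * (√(1 - τ) * √(1 - ⟪a, c⟫ ^ 2)) := by
          gcongr
          · linarith
          · exact one_sub_le_sqrt_mul_sqrt hab₀ (by linarith) (by linarith)
          · exact one_sub_le_sqrt_mul_sqrt hac₀ (by linarith) (by linarith)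
      _ = √(1 - τ) ^ 2 * (√(1 - ⟪a, b⟫ ^ 2) * √(1 - ⟪a, c⟫ ^ 2)) := by ring
      _ = (1 - τ) * (√(1 - ⟪a, b⟫ ^ 2) * √(1 - ⟪a, c⟫ ^ 2)) := by
          rw [Real.sq_sqrt (by linarith)]
  rw [inner_orthoUnit_orthoUnit ha, le_div_iff₀ (mul_pos hσb hσc)]
  linarith

end OrthoUnit

section Sign

theorem measurable_sign : Measurable Real.sign :=
  .ite measurableSet_Iio measurable_const (.ite measurableSet_Ioi measurable_const measurable_const)

theorem abs_sign_le_one (x : ℝ) : |Real.sign x| ≤ 1 := by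
  rcases Real.sign_apply_eq x with h | h | h <;> simp [h]

theorem sign_mul_of_pos {r : ℝ} (hr : 0 < r) (x : ℝ) : Real.sign (r * x) = Real.sign x := by
  rcases lt_trichotomy x 0 with hx | rfl | hx
  · rw [Real.sign_of_neg hx, Real.sign_of_neg (mul_neg_of_pos_of_neg hr hx)]
  · rw [mul_zero]
  · rw [Real.sign_of_pos hx, Real.sign_of_pos (mul_pos hr hx)]

end Sign

/-! ### The Sheppard formula -/

section Sheppard

theorem intervalIntegrable_sign_cos_mul_sign_cos_sub (θ a b : ℝ) :
    IntervalIntegrable (fun φ ↦ Real.sign (Real.cos φ) * Real.sign (Real.cos (φ - θ)))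
      volume a b := by
  have hmeas : Measurable fun φ ↦ Real.sign (Real.cos φ) * Real.sign (Real.cos (φ - θ)) :=
    (measurable_sign.comp (by fun_prop)).mul (measurable_sign.comp (by fun_prop))
  refine (intervalIntegrable_const (c := (1 : ℝ))).mono_fun hmeas.aestronglyMeasurable ?_
  filter_upwards with φ
  rw [norm_one, Real.norm_eq_abs, abs_mul]
  exact mul_le_one₀ (abs_sign_le_one _) (abs_nonneg _) (abs_sign_le_one _)

theorem periodic_sign_cos_mul_sign_cos_sub (θ : ℝ) :
    Function.Periodic (fun φ ↦ Real.sign (Real.cos φ) * Real.sign (Real.cos (φ - θ))) Real.pi := by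
  intro φ
  simp only [add_sub_right_comm φ Real.pi θ, Real.cos_add_pi, Real.sign_neg, neg_mul_neg]

theorem integral_sign_cos_mul_sign_cos_sub_half_period {θ : ℝ} (h₀ : 0 ≤ θ) (hπ : θ ≤ Real.pi) :
    ∫ φ in (-(Real.pi / 2))..(Real.pi / 2),
      Real.sign (Real.cos φ) * Real.sign (Real.cos (φ - θ)) = Real.pi - 2 * θ := by
  have hneg : ∀ φ ∈ Set.Ioo (-(Real.pi / 2)) (θ - Real.pi / 2),
      Real.sign (Real.cos φ) * Real.sign (Real.cos (φ - θ)) = -1 := fun φ hφ ↦ by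
    rw [Real.sign_of_pos (Real.cos_pos_of_mem_Ioo ⟨hφ.1, by linarith [hφ.2]⟩), one_mul,
      ← Real.cos_neg, neg_sub, Real.sign_of_neg]
    exact Real.cos_neg_of_pi_div_two_lt_of_lt (by linarith [hφ.2]) (by linarith [hφ.1])
  have hpos : ∀ φ ∈ Set.Ioo (θ - Real.pi / 2) (Real.pi / 2),
      Real.sign (Real.cos φ) * Real.sign (Real.cos (φ - θ)) = 1 := fun φ hφ ↦ by
    rw [Real.sign_of_pos (Real.cos_pos_of_mem_Ioo ⟨by linarith [hφ.1], hφ.2⟩), one_mul,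
      Real.sign_of_pos (Real.cos_pos_of_mem_Ioo ⟨by linarith [hφ.1], by linarith [hφ.2]⟩)]
  rw [← intervalIntegral.integral_add_adjacent_intervals
      (intervalIntegrable_sign_cos_mul_sign_cos_sub θ _ (θ - Real.pi / 2))
      (intervalIntegrable_sign_cos_mul_sign_cos_sub θ _ _),
    intervalIntegral.integral_congr_Ioo_of_le (by linarith) hneg,
    intervalIntegral.integral_congr_Ioo_of_le (by linarith) hpos,
    intervalIntegral.integral_const, intervalIntegral.integral_const, smul_eq_mul, smul_eq_mul]
  ring

theorem integral_sign_cos_mul_sign_cos_sub {θ : ℝ} (h₀ : 0 ≤ θ) (hπ : θ ≤ Real.pi) :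
    ∫ φ in Set.Ioo (-Real.pi) Real.pi, Real.sign (Real.cos φ) * Real.sign (Real.cos (φ - θ)) =
      2 * (Real.pi - 2 * θ) := by
  have hper := periodic_sign_cos_mul_sign_cos_sub θ
  rw [← integral_Ioc_eq_integral_Ioo, ← intervalIntegral.integral_of_le (by linarith),
    ← intervalIntegral.integral_add_adjacent_intervals
      (intervalIntegrable_sign_cos_mul_sign_cos_sub θ _ 0)
      (intervalIntegrable_sign_cos_mul_sign_cos_sub θ _ _)]
  have hleft := hper.intervalIntegral_add_eq (-Real.pi) (-(Real.pi / 2))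
  have hright := hper.intervalIntegral_add_eq 0 (-(Real.pi / 2))
  rw [neg_add_cancel] at hleft
  rw [zero_add] at hright
  rw [hleft, hright, show -(Real.pi / 2) + Real.pi = Real.pi / 2 by ring,
    integral_sign_cos_mul_sign_cos_sub_half_period h₀ hπ, ← two_mul]

theorem integral_prod_gaussianReal_eq_radial_mul_angular {q : ℝ × ℝ → ℝ}
    (hq : ∀ r : ℝ, 0 < r → ∀ p, q (r • p) = q p) :
    ∫ p, q p ∂((gaussianReal 0 1).prod (gaussianReal 0 1)) =
      (∫ r in Set.Ioi (0 : ℝ), r * ((√(2 * Real.pi))⁻¹ ^ 2 * Real.exp (-r ^ 2 / 2))) *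
        ∫ φ in Set.Ioo (-Real.pi) Real.pi, q (Real.cos φ, Real.sin φ) := by
  rw [gaussianReal_of_var_ne_zero 0 one_ne_zero, prod_withDensity (by fun_prop) (by fun_prop),
    integral_withDensity_eq_integral_toReal_smul (by fun_prop)
      (.of_forall fun p ↦ ENNReal.mul_lt_top gaussianPDF_lt_top gaussianPDF_lt_top),
    ← Measure.volume_eq_prod, ← integral_comp_polarCoord_symm, polarCoord_target,
    Measure.volume_eq_prod, ← setIntegral_prod_mul, ← Measure.volume_eq_prod]
  refine setIntegral_congr_fun (measurableSet_Ioi.prod measurableSet_Ioo) fun p hp ↦ ?_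
  have hexp : Real.exp (-p.1 ^ 2 / 2) =
      Real.exp (-(p.1 * Real.cos p.2) ^ 2 / 2) * Real.exp (-(p.1 * Real.sin p.2) ^ 2 / 2) := by
    rw [← Real.exp_add]
    congr 1
    linear_combination (p.1 ^ 2 / 2) * Real.sin_sq_add_cos_sq p.2
  have hqp := hq p.1 hp.1 (Real.cos p.2, Real.sin p.2)
  rw [Prod.smul_mk, smul_eq_mul, smul_eq_mul] at hqp
  simp only [polarCoord_symm_apply, ENNReal.toReal_mul, toReal_gaussianPDF, smul_eq_mul, hqp,
    gaussianPDFReal, NNReal.coe_one, mul_one, sub_zero, hexp]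
  ring

theorem integral_prod_gaussianReal_eq_integral_angular {q : ℝ × ℝ → ℝ}
    (hq : ∀ r : ℝ, 0 < r → ∀ p, q (r • p) = q p) :
    ∫ p, q p ∂((gaussianReal 0 1).prod (gaussianReal 0 1)) =
      (2 * Real.pi)⁻¹ * ∫ φ in Set.Ioo (-Real.pi) Real.pi, q (Real.cos φ, Real.sin φ) := by
  -- Total mass one determines the radial integral.
  have hone := integral_prod_gaussianReal_eq_radial_mul_angular (q := fun _ ↦ 1) fun _ _ _ ↦ rfl
  rw [integral_const, probReal_univ, one_smul, setIntegral_const, smul_eq_mul, mul_one,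
    Real.volume_real_Ioo_of_le (by linarith [Real.pi_pos]), sub_neg_eq_add, ← two_mul] at hone
  rw [integral_prod_gaussianReal_eq_radial_mul_angular hq, eq_inv_of_mul_eq_one_left hone.symm]

theorem integral_sign_mul_sign_prod_gaussianReal {θ : ℝ} (h₀ : 0 ≤ θ) (hπ : θ ≤ Real.pi) :
    ∫ p : ℝ × ℝ, Real.sign p.1 * Real.sign (Real.cos θ * p.1 + Real.sin θ * p.2)
      ∂((gaussianReal 0 1).prod (gaussianReal 0 1)) = 2 / Real.pi * (Real.pi / 2 - θ) := by
  rw [integral_prod_gaussianReal_eq_integral_angular]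
  · simp_rw [mul_comm (Real.cos θ), mul_comm (Real.sin θ), ← Real.cos_sub,
      integral_sign_cos_mul_sign_cos_sub h₀ hπ]
    field_simp
  · intro r hr p
    rw [Prod.smul_fst, Prod.smul_snd, smul_eq_mul, smul_eq_mul, mul_left_comm _ r,
      mul_left_comm _ r, ← mul_add, sign_mul_of_pos hr, sign_mul_of_pos hr]

variable {E : Type*} [NormedAddCommGroup E] [InnerProductSpace ℝ E]

theorem charFunDual_gaussianReal_zero_one (L : StrongDual ℝ ℝ) :
    charFunDual (gaussianReal 0 1) L = Complex.exp (-(L 1 ^ 2 : ℝ) / 2) := by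
  simp [IsGaussian.charFunDual_eq, integral_complex_ofReal, max_eq_left (sq_nonneg (L 1)), neg_div]

theorem norm_smul_add_smul_sq {a b : E} (ha : ‖a‖ = 1) (hb : ‖b‖ = 1) {θ : ℝ}
    (hθ : Real.cos θ = ⟪a, b⟫) (s t : ℝ) :
    ‖s • a + t • b‖ ^ 2 = (s + Real.cos θ * t) ^ 2 + (Real.sin θ * t) ^ 2 := by
  rw [norm_add_sq_real, norm_smul, norm_smul, ha, hb, inner_smul_left, inner_smul_right, ← hθ,
    RCLike.conj_to_real, mul_one, mul_one, Real.norm_eq_abs, Real.norm_eq_abs, sq_abs, sq_abs]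
  linear_combination -t ^ 2 * Real.sin_sq_add_cos_sq θ

variable [FiniteDimensional ℝ E] [MeasurableSpace E] [BorelSpace E]

theorem stdGaussian_map_inner_prodMk_inner {a b : E} (ha : ‖a‖ = 1) (hb : ‖b‖ = 1) {θ : ℝ}
    (hθ : Real.cos θ = ⟪a, b⟫) :
    (stdGaussian E).map (fun g ↦ (⟪a, g⟫, ⟪b, g⟫)) =
      ((gaussianReal 0 1).prod (gaussianReal 0 1)).map
        (fun p ↦ (p.1, Real.cos θ * p.1 + Real.sin θ * p.2)) := by
  let F : E →L[ℝ] ℝ × ℝ := (innerSL ℝ a).prod (innerSL ℝ b)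
  let G : ℝ × ℝ →L[ℝ] ℝ × ℝ := (ContinuousLinearMap.fst ℝ ℝ ℝ).prod
    (Real.cos θ • ContinuousLinearMap.fst ℝ ℝ ℝ + Real.sin θ • ContinuousLinearMap.snd ℝ ℝ ℝ)
  change (stdGaussian E).map F = Measure.map G _
  apply Measure.ext_of_charFunDual
  ext L
  have hL (x y : ℝ) : L (x, y) = L (1, 0) * x + L (0, 1) * y := by
    rw [show (x, y) = x • (1, 0) + y • (0, 1) by simp, map_add, map_smul, map_smul, smul_eq_mul,
      smul_eq_mul, mul_comm x, mul_comm y]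
  have hLF : L.comp F = innerSL ℝ (L (1, 0) • a + L (0, 1) • b) := by
    ext g
    simp only [F, ContinuousLinearMap.comp_apply, ContinuousLinearMap.prod_apply,
      innerSL_apply_apply, hL ⟪a, g⟫, inner_add_left, real_inner_smul_left]
  rw [charFunDual_map, charFunDual_map, charFunDual_prod, charFunDual_stdGaussian,
    charFunDual_gaussianReal_zero_one, charFunDual_gaussianReal_zero_one, ← Complex.exp_add, hLF,
    innerSL_apply_norm, ← Complex.ofReal_pow, norm_smul_add_smul_sq ha hb hθ]
  have hfst : (L.comp G).comp (.inl ℝ ℝ ℝ) 1 = L (1, 0) + Real.cos θ * L (0, 1) := by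
    simp [G, hL 1 (Real.cos θ), mul_comm]
  have hsnd : (L.comp G).comp (.inr ℝ ℝ ℝ) 1 = Real.sin θ * L (0, 1) := by
    simp [G, hL 0 (Real.sin θ), mul_comm]
  rw [hfst, hsnd, ← add_div, ← neg_add, ← Complex.ofReal_add]

theorem integral_sign_inner_mul_sign_inner {a b : E} (ha : ‖a‖ = 1) (hb : ‖b‖ = 1) :
    ∫ g, Real.sign ⟪a, g⟫ * Real.sign ⟪b, g⟫ ∂stdGaussian E =
      2 / Real.pi * Real.arcsin ⟪a, b⟫ := by
  have hab := abs_le.1 (abs_real_inner_le_norm a b)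
  rw [ha, hb, mul_one] at hab
  have hlaw := stdGaussian_map_inner_prodMk_inner ha hb (Real.cos_arccos hab.1 hab.2)
  have hmeas : Measurable fun p : ℝ × ℝ ↦ Real.sign p.1 * Real.sign p.2 :=
    (measurable_sign.comp measurable_fst).mul (measurable_sign.comp measurable_snd)
  have hint := congr(∫ p, Real.sign p.1 * Real.sign p.2 ∂$hlaw)
  rw [integral_map (by fun_prop) hmeas.aestronglyMeasurable,
    integral_map (by fun_prop) hmeas.aestronglyMeasurable] at hint
  rw [hint, integral_sign_mul_sign_prod_gaussianReal (Real.arccos_nonneg _) (Real.arccos_le_pi _),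
    ← Real.arcsin_eq_pi_div_two_sub_arccos]

end Sheppard

section Gaussian

variable {E : Type*} [NormedAddCommGroup E] [InnerProductSpace ℝ E] [FiniteDimensional ℝ E]
  [MeasurableSpace E] [BorelSpace E]

theorem stdGaussian_map_inner {a : E} (ha : ‖a‖ = 1) :
    (stdGaussian E).map (fun g ↦ ⟪a, g⟫) = gaussianReal 0 1 := by
  have h := IsGaussian.map_eq_gaussianReal (μ := stdGaussian E) (innerSL ℝ a)
  rw [integral_strongDual_stdGaussian, variance_dual_stdGaussian, innerSL_apply_norm, ha, one_pow,
    Real.toNNReal_one] at h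
  exact h

theorem covariance_inner_stdGaussian (a b : E) :
    cov[fun g ↦ ⟪a, g⟫, fun g ↦ ⟪b, g⟫; stdGaussian E] = ⟪a, b⟫ := by
  rw [← covarianceBilin_apply_eq_cov IsGaussian.memLp_two_id, covarianceBilin_stdGaussian,
    innerSL_apply_apply]

theorem indepFun_inner_of_orthogonal {ι : Type*} [Finite ι] {a : E} {y : ι → E}
    (h : ∀ j, ⟪a, y j⟫ = 0) :
    IndepFun (fun g ↦ ⟪a, g⟫) (fun g j ↦ ⟪y j, g⟫) (stdGaussian E) := by
  have := Fintype.ofFinite ι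
  let F : E →L[ℝ] (Unit → ℝ) × (ι → ℝ) :=
    (ContinuousLinearMap.pi fun _ ↦ innerSL ℝ a).prod
      (ContinuousLinearMap.pi fun j ↦ innerSL ℝ (y j))
  have hgauss : HasGaussianLaw F (stdGaussian E) := IsGaussian.hasGaussianLaw_id.map F
  have hindep := hgauss.indepFun_of_covariance_eval (X := fun (_ : Unit) g ↦ ⟪a, g⟫)
    (Y := fun j g ↦ ⟪y j, g⟫) fun _ j ↦ (covariance_inner_stdGaussian a (y j)).trans (h j)
  exact hindep.comp (measurable_pi_apply ()) measurable_id

theorem integral_stdGaussian_comp_neg (f : E → ℝ) :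
    ∫ g, f (-g) ∂stdGaussian E = ∫ g, f g ∂stdGaussian E := by
  conv_rhs => rw [← stdGaussian_map (LinearIsometryEquiv.neg ℝ (E := E))]
  exact (integral_map_equiv
    (LinearIsometryEquiv.neg ℝ (E := E)).toHomeomorph.toMeasurableEquiv f).symm

theorem gaussianReal_real_abs_le_le {δ : ℝ} (hδ : 0 ≤ δ) :
    (gaussianReal 0 1).real {x | |x| ≤ δ} ≤ δ := by
  have hpdf (x : ℝ) : gaussianPDFReal 0 1 x ≤ 1 / 2 := by
    have hsqrt : 2 ≤ √(2 * Real.pi) := Real.le_sqrt_of_sq_le (by linarith [Real.pi_gt_three])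
    rw [gaussianPDFReal, NNReal.coe_one, mul_one, mul_one, one_div]
    have hexp : Real.exp (-(x - 0) ^ 2 / 2) ≤ 1 :=
      Real.exp_le_one_iff.2 (by linarith [sq_nonneg (x - 0)])
    exact (mul_le_of_le_one_right (by positivity) hexp).trans (by gcongr)
  calc (gaussianReal 0 1).real {x | |x| ≤ δ}
      = ∫ x in Set.Icc (-δ) δ, gaussianPDFReal 0 1 x := by
        rw [Measure.real, gaussianReal_apply_eq_integral 0 one_ne_zero, ENNReal.toReal_ofReal
          (integral_nonneg fun x ↦ gaussianPDFReal_nonneg _ _ _)]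
        simp_rw [abs_le]
        rfl
    _ ≤ ∫ _ in Set.Icc (-δ) δ, (1 / 2 : ℝ) :=
        setIntegral_mono (integrable_gaussianPDFReal 0 1).integrableOn (by simp) hpdf
    _ = δ := by
        rw [setIntegral_const, Real.volume_real_Icc_of_le (by linarith), smul_eq_mul]
        ring

theorem stdGaussian_preimage_inner_ne_zero {a : E} (ha : ‖a‖ = 1) {s : Set ℝ}
    (hs : MeasurableSet s) (hvol : volume s ≠ 0) :
    stdGaussian E ((fun g ↦ ⟪a, g⟫) ⁻¹' s) ≠ 0 := by
  rw [← Measure.map_apply (by fun_prop) hs, stdGaussian_map_inner ha]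
  exact fun h ↦ hvol (gaussianReal_absolutelyContinuous' 0 one_ne_zero h)

end Gaussian

section Cond

variable {Ω α β : Type*} [MeasurableSpace Ω] [MeasurableSpace α] [MeasurableSpace β]
  {μ : Measure Ω} {T : Ω → α} {Y : Ω → β} {B : Set α}

theorem cond_map (hT : Measurable T) (hB : MeasurableSet B) :
    cond (μ.map T) B = (cond μ (T ⁻¹' B)).map T := by
  rw [ProbabilityTheory.cond, ProbabilityTheory.cond, Measure.restrict_map hT hB,
    Measure.map_apply hT hB, Measure.map_smul]

theorem integral_mul_cond_of_indepFun (hTY : IndepFun T Y μ) (hT : Measurable T)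
    (hY : Measurable Y) (hB : MeasurableSet B) {f : α → ℝ} (hf : Measurable f) {h : β → ℝ}
    (hh : Measurable h) :
    ∫ ω, f (T ω) * h (Y ω) ∂(cond μ (T ⁻¹' B)) =
      (∫ ω, f (T ω) ∂(cond μ (T ⁻¹' B))) * ∫ ω, h (Y ω) ∂μ := by
  have hrestrict : ∫ ω in T ⁻¹' B, f (T ω) * h (Y ω) ∂μ =
      (∫ ω in T ⁻¹' B, f (T ω) ∂μ) * ∫ ω, h (Y ω) ∂μ := by
    rw [← integral_indicator (hT hB), ← integral_indicator (hT hB)]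
    simp_rw [Set.indicator_mul_left]
    exact hTY.integral_fun_comp_mul_comp (f := B.indicator f) hT.aemeasurable hY.aemeasurable
      (hf.indicator hB).aestronglyMeasurable hh.aestronglyMeasurable
  rw [ProbabilityTheory.cond, integral_smul_measure, integral_smul_measure, hrestrict,
    smul_mul_assoc]

theorem integral_cond_of_indepFun [IsFiniteMeasure μ] (hTY : IndepFun T Y μ) (hT : Measurable T)
    (hY : Measurable Y) (hB : MeasurableSet B) (hμB : μ (T ⁻¹' B) ≠ 0) {h : β → ℝ}
    (hh : Measurable h) :
    ∫ ω, h (Y ω) ∂(cond μ (T ⁻¹' B)) = ∫ ω, h (Y ω) ∂μ := by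
  have := cond_isProbabilityMeasure hμB
  simpa using integral_mul_cond_of_indepFun hTY hT hY hB (f := fun _ ↦ 1) measurable_const hh

end Cond

/-! ### Sign sums and the local gain -/

section SignSum

variable {ι : Type*} [Fintype ι] {w : ι → ℝ}

/-- The weighted sum of the signs of `t`. Up to `nearWeight`, the local gain is the positive part of
`signSum` or of its negative. -/
noncomputable def signSum (w t : ι → ℝ) : ℝ := ∑ j, w j * Real.sign (t j)

/-- The total weight of the indices `j` with `t j` within `δ` of zero, where the sign of `t j` can
be changed by a perturbation of size `δ`. -/
noncomputable def nearWeight (w : ι → ℝ) (δ : ℝ) (t : ι → ℝ) : ℝ :=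
  ∑ j, if |t j| ≤ δ then w j else 0

/-- The local gain `max(0, 2 ∑_{j ∈ B} w_j - ∑_j w_j)` with `B = {j | x t_j ≤ -ε}`, where `x = ± 1`
is the side of the cut given to the vertex and `t` lists the Gaussian projections of its neighbours,
multiplied by the signs of the edges. -/
noncomputable def localGain (w : ι → ℝ) (ε x : ℝ) (t : ι → ℝ) : ℝ :=
  max 0 (2 * (∑ j, if x * t j ≤ -ε then w j else 0) - ∑ j, w j)

theorem measurable_signSum (w : ι → ℝ) : Measurable (signSum w) :=
  Finset.measurable_fun_sum _ fun j _ ↦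
    (measurable_sign.comp (measurable_pi_apply j)).const_mul (w j)

theorem abs_signSum_le (hw : ∀ j, 0 ≤ w j) (t : ι → ℝ) : |signSum w t| ≤ ∑ j, w j :=
  (Finset.abs_sum_le_sum_abs _ _).trans <| Finset.sum_le_sum fun j _ ↦ by
    rw [abs_mul, abs_of_nonneg (hw j)]
    exact mul_le_of_le_one_right (hw j) (abs_sign_le_one _)

theorem signSum_neg (w t : ι → ℝ) : signSum w (-t) = -signSum w t := by
  simp [signSum, Real.sign_neg]

theorem measurable_nearWeight (w : ι → ℝ) (δ : ℝ) : Measurable (nearWeight w δ) :=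
  Finset.measurable_fun_sum _ fun j _ ↦
    .ite (measurableSet_le (measurable_pi_apply j).abs measurable_const) measurable_const
      measurable_const

theorem nearWeight_nonneg (hw : ∀ j, 0 ≤ w j) (δ : ℝ) (t : ι → ℝ) : 0 ≤ nearWeight w δ t :=
  Finset.sum_nonneg fun j _ ↦ by split_ifs <;> simp [hw j]

theorem nearWeight_le (hw : ∀ j, 0 ≤ w j) (δ : ℝ) (t : ι → ℝ) : nearWeight w δ t ≤ ∑ j, w j :=
  Finset.sum_le_sum fun j _ ↦ by split_ifs <;> simp [hw j]

theorem measurable_localGain (w : ι → ℝ) (ε : ℝ) :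
    Measurable fun p : ℝ × (ι → ℝ) ↦ localGain w ε p.1 p.2 := by
  refine measurable_const.max (((Finset.measurable_fun_sum _ fun j _ ↦ ?_).const_mul 2).sub_const _)
  exact .ite (measurableSet_le (by fun_prop) measurable_const) measurable_const measurable_const

theorem localGain_nonneg (w : ι → ℝ) (ε x : ℝ) (t : ι → ℝ) : 0 ≤ localGain w ε x t :=
  le_max_left _ _

theorem localGain_le (hw : ∀ j, 0 ≤ w j) (ε x : ℝ) (t : ι → ℝ) : localGain w ε x t ≤ ∑ j, w j := by
  have hsum : (∑ j, if x * t j ≤ -ε then w j else 0) ≤ ∑ j, w j :=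
    Finset.sum_le_sum fun j _ ↦ by split_ifs <;> simp [hw j]
  exact max_le (Finset.sum_nonneg fun j _ ↦ hw j) (by linarith)

theorem neg_sign_sub_ite_le {ε τ σ s r : ℝ} (hτ : 0 < τ) (hσ : τ ≤ σ) (hsr : |s - σ * r| ≤ ε) :
    -Real.sign r - 2 * (if |r| ≤ 2 * ε / τ then 1 else 0) ≤ 2 * (if s ≤ -ε then 1 else 0) - 1 := by
  have hsign := abs_le.1 (abs_sign_le_one r)
  split_ifs with hr hs hs
  · linarith
  · linarith
  · linarith
  -- A negative `r` far from zero would force `s ≤ -ε`, so `r` is positive.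
  have hr' : 2 * ε < τ * |r| := by rwa [not_le, div_lt_iff₀' hτ] at hr
  have hrpos : 0 < r := by
    by_contra! hrneg
    rw [abs_of_nonpos hrneg] at hr'
    exact hs (by nlinarith [(abs_le.1 hsr).2])
  rw [Real.sign_of_pos hrpos]
  norm_num

theorem neg_mul_signSum_sub_nearWeight_le_localGain (hw : ∀ j, 0 ≤ w j) {ε τ x : ℝ}
    {σ s r : ι → ℝ} (hτ : 0 < τ) (hσ : ∀ j, τ ≤ σ j) (hx : x = 1 ∨ x = -1)
    (hsr : ∀ j, |s j - σ j * r j| ≤ ε) :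
    -x * signSum w r - 2 * nearWeight w (2 * ε / τ) r ≤ localGain w ε x s := by
  have habs : |x| = 1 := by rcases hx with rfl | rfl <;> simp
  refine le_max_of_le_right ?_
  simp only [signSum, nearWeight, Finset.mul_sum, ← Finset.sum_sub_distrib]
  refine Finset.sum_le_sum fun j _ ↦ ?_
  have hsign : Real.sign (x * r j) = x * Real.sign (r j) := by
    rcases hx with rfl | rfl <;> simp [Real.sign_neg]
  have hxsr : |x * s j - σ j * (x * r j)| ≤ ε := by
    rw [mul_left_comm, ← mul_sub, abs_mul, habs, one_mul]
    exact hsr j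
  have hterm := mul_le_mul_of_nonneg_left (neg_sign_sub_ite_le hτ (hσ j) hxsr) (hw j)
  rw [hsign, abs_mul, habs, one_mul] at hterm
  convert hterm using 1 <;> split_ifs <;> ring

theorem half_abs_signSum_sub_nearWeight_le_localGain (hw : ∀ j, 0 ≤ w j) {ε τ x : ℝ}
    {σ s r : ι → ℝ} (hτ : 0 < τ) (hσ : ∀ j, τ ≤ σ j) (hx : x = 1 ∨ x = -1)
    (hsr : ∀ j, |s j - σ j * r j| ≤ ε) :
    (|signSum w r| - x * signSum w r) / 2 - 2 * nearWeight w (2 * ε / τ) r ≤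
      localGain w ε x s := by
  have hneg := neg_mul_signSum_sub_nearWeight_le_localGain hw hτ hσ hx hsr
  have hnear := nearWeight_nonneg hw (2 * ε / τ) r
  have hgain := localGain_nonneg w ε x s
  have habs : |signSum w r| = |x * signSum w r| := by rcases hx with rfl | rfl <;> simp
  rw [habs]
  rcases abs_cases (x * signSum w r) with ⟨h, -⟩ | ⟨h, -⟩ <;> linarith

section Integrable

variable {Ω : Type*} [MeasurableSpace Ω] {μ : Measure Ω} [IsFiniteMeasure μ] {T : Ω → ι → ℝ}

theorem integrable_signSum_comp (hw : ∀ j, 0 ≤ w j) (hT : Measurable T) :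
    Integrable (fun ω ↦ signSum w (T ω)) μ :=
  .of_bound ((measurable_signSum w).comp hT).aestronglyMeasurable (∑ j, w j)
    (.of_forall fun _ ↦ abs_signSum_le hw _)

theorem integrable_nearWeight_comp (hw : ∀ j, 0 ≤ w j) (δ : ℝ) (hT : Measurable T) :
    Integrable (fun ω ↦ nearWeight w δ (T ω)) μ :=
  .of_bound ((measurable_nearWeight w δ).comp hT).aestronglyMeasurable (∑ j, w j)
    (.of_forall fun _ ↦ by
      simpa [abs_of_nonneg (nearWeight_nonneg hw δ _)] using nearWeight_le hw δ _)

theorem integrable_localGain_comp (hw : ∀ j, 0 ≤ w j) (ε : ℝ) {X : Ω → ℝ} (hX : Measurable X)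
    (hT : Measurable T) : Integrable (fun ω ↦ localGain w ε (X ω) (T ω)) μ :=
  .of_bound ((measurable_localGain w ε).comp (hX.prodMk hT)).aestronglyMeasurable (∑ j, w j)
    (.of_forall fun _ ↦ by
      simpa [abs_of_nonneg (localGain_nonneg _ _ _ _)] using localGain_le hw ε _ _)

end Integrable

end SignSum

section Expectation

variable {ι E : Type*} [Fintype ι] {w : ι → ℝ} [NormedAddCommGroup E] [InnerProductSpace ℝ E]
  [FiniteDimensional ℝ E] [MeasurableSpace E] [BorelSpace E] {y : ι → E}

theorem integral_signSum_inner (w : ι → ℝ) (y : ι → E) :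
    ∫ g, signSum w (fun j ↦ ⟪y j, g⟫) ∂stdGaussian E = 0 := by
  have h := integral_stdGaussian_comp_neg fun g : E ↦ signSum w (fun j ↦ ⟪y j, g⟫)
  have hodd (g : E) : signSum w (fun j ↦ ⟪y j, -g⟫) = -signSum w (fun j ↦ ⟪y j, g⟫) := by
    rw [← signSum_neg]
    congr with j
    exact inner_neg_right _ _
  simp_rw [hodd, integral_neg] at h
  linarith

theorem integral_signSum_inner_sq (w : ι → ℝ) (hy : ∀ j, ‖y j‖ = 1) :
    ∫ g, signSum w (fun j ↦ ⟪y j, g⟫) ^ 2 ∂stdGaussian E =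
      2 / Real.pi * ∑ j, ∑ k, w j * w k * Real.arcsin ⟪y j, y k⟫ := by
  have hint (j k : ι) : Integrable
      (fun g ↦ w j * w k * (Real.sign ⟪y j, g⟫ * Real.sign ⟪y k, g⟫)) (stdGaussian E) := by
    refine (Integrable.of_bound (C := 1) ?_ (.of_forall fun g ↦ ?_)).const_mul _
    · exact ((measurable_sign.comp (by fun_prop)).mul
        (measurable_sign.comp (by fun_prop))).aestronglyMeasurable
    · rw [norm_mul]
      exact mul_le_one₀ (abs_sign_le_one _) (norm_nonneg _) (abs_sign_le_one _)
  simp_rw [signSum, sq, Finset.sum_mul_sum, mul_mul_mul_comm (w _)]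
  rw [integral_finsetSum _ fun j _ ↦ integrable_finsetSum _ fun k _ ↦ hint j k, Finset.mul_sum]
  refine Finset.sum_congr rfl fun j _ ↦ ?_
  rw [integral_finsetSum _ fun k _ ↦ hint j k, Finset.mul_sum]
  refine Finset.sum_congr rfl fun k _ ↦ ?_
  rw [integral_const_mul, integral_sign_inner_mul_sign_inner (hy j) (hy k), mul_left_comm]

theorem sum_arcsin_le_mul_integral_abs_signSum_inner (hw : ∀ j, 0 ≤ w j) (hy : ∀ j, ‖y j‖ = 1) :
    2 / Real.pi * ∑ j, ∑ k, w j * w k * Real.arcsin ⟪y j, y k⟫ ≤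
      (∑ j, w j) * ∫ g, |signSum w (fun j ↦ ⟪y j, g⟫)| ∂stdGaussian E := by
  have hint : Integrable (fun g ↦ |signSum w (fun j ↦ ⟪y j, g⟫)|) (stdGaussian E) :=
    (integrable_signSum_comp hw (by fun_prop)).abs
  rw [← integral_signSum_inner_sq w hy, ← integral_const_mul]
  refine integral_mono_of_nonneg (.of_forall fun g ↦ sq_nonneg _) (hint.const_mul _)
    (.of_forall fun g ↦ ?_)
  simp only
  rw [← sq_abs, sq]
  exact mul_le_mul_of_nonneg_right (abs_signSum_le hw _) (abs_nonneg _)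

theorem integral_nearWeight_inner_le (hw : ∀ j, 0 ≤ w j) (hy : ∀ j, ‖y j‖ = 1) {δ : ℝ}
    (hδ : 0 ≤ δ) :
    ∫ g, nearWeight w δ (fun j ↦ ⟪y j, g⟫) ∂stdGaussian E ≤ (∑ j, w j) * δ := by
  have hset : MeasurableSet {x : ℝ | |x| ≤ δ} := measurableSet_le measurable_abs measurable_const
  have hind (j : ι) (g : E) : (if |⟪y j, g⟫| ≤ δ then w j else 0) =
      {x : ℝ | |x| ≤ δ}.indicator (fun _ ↦ w j) ⟪y j, g⟫ := rfl
  have hmeas (j : ι) : Measurable ({x : ℝ | |x| ≤ δ}.indicator fun _ ↦ w j) :=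
    measurable_const.indicator hset
  have hmap (j : ι) : MeasurePreserving (fun g ↦ ⟪y j, g⟫) (stdGaussian E) (gaussianReal 0 1) :=
    ⟨by fun_prop, stdGaussian_map_inner (hy j)⟩
  have hint (j : ι) : Integrable (fun g ↦ {x : ℝ | |x| ≤ δ}.indicator (fun _ ↦ w j) ⟪y j, g⟫)
      (stdGaussian E) :=
    (hmap j).integrable_comp_of_integrable ((integrable_const (w j)).indicator hset)
  simp_rw [nearWeight, hind]
  rw [integral_finsetSum _ fun j _ ↦ hint j, Finset.sum_mul]
  refine Finset.sum_le_sum fun j _ ↦ ?_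
  rw [← integral_map (hmap j).aemeasurable (hmeas j).aestronglyMeasurable, (hmap j).map_eq,
    integral_indicator_const _ hset, smul_eq_mul, mul_comm]
  exact mul_le_mul_of_nonneg_left (gaussianReal_real_abs_le_le hδ) (hw j)

end Expectation

section CondExpectation

variable {ι E : Type*} [NormedAddCommGroup E] [InnerProductSpace ℝ E] [FiniteDimensional ℝ E]
  [MeasurableSpace E] [BorelSpace E] {v : E} {u y : ι → E}

/-- The sign used to round the Gaussian projection `s` of a vertex; `0` is rounded to `1`. -/
noncomputable def roundingSign (s : ℝ) : ℝ := if 0 ≤ s then 1 else -1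

theorem roundingSign_eq_one_or (s : ℝ) : roundingSign s = 1 ∨ roundingSign s = -1 := by
  unfold roundingSign
  split_ifs <;> simp

theorem measurable_roundingSign : Measurable roundingSign :=
  .ite measurableSet_Ici measurable_const measurable_const

theorem integral_comp_inner_cond [Finite ι] (hv : ‖v‖ = 1) (horth : ∀ j, ⟪v, y j⟫ = 0) {ε : ℝ}
    (hε : 0 < ε) {h : (ι → ℝ) → ℝ} (hh : Measurable h) :
    ∫ g, h (fun j ↦ ⟪y j, g⟫) ∂(cond (stdGaussian E) {g | |⟪v, g⟫| < ε}) =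
      ∫ g, h (fun j ↦ ⟪y j, g⟫) ∂stdGaussian E := by
  have hopen : IsOpen {x : ℝ | |x| < ε} := isOpen_lt continuous_abs continuous_const
  exact integral_cond_of_indepFun (indepFun_inner_of_orthogonal horth) (by fun_prop) (by fun_prop)
    hopen.measurableSet (stdGaussian_preimage_inner_ne_zero hv hopen.measurableSet
      (hopen.measure_ne_zero _ ⟨0, by simpa using hε⟩)) hh

variable [Fintype ι] {w : ι → ℝ}

theorem integral_roundingSign_mul_signSum_cond (w : ι → ℝ) (horth : ∀ j, ⟪v, y j⟫ = 0)
    (ε : ℝ) :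
    ∫ g, roundingSign ⟪v, g⟫ * signSum w (fun j ↦ ⟪y j, g⟫)
      ∂(cond (stdGaussian E) {g | |⟪v, g⟫| < ε}) = 0 :=
  (integral_mul_cond_of_indepFun (indepFun_inner_of_orthogonal horth) (by fun_prop) (by fun_prop)
    (measurableSet_lt measurable_abs measurable_const) measurable_roundingSign
    (measurable_signSum w)).trans (by rw [integral_signSum_inner, mul_zero])

theorem integral_signSum_sub_nearWeight_le_integral_localGain_cond (hw : ∀ j, 0 ≤ w j)
    (hv : ‖v‖ = 1) (horth : ∀ j, ⟪v, y j⟫ = 0) {ε τ : ℝ} {ρ σ : ι → ℝ} (hε : 0 < ε) (hτ : 0 < τ)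
    (hu : ∀ j, u j = ρ j • v + σ j • y j) (hρ : ∀ j, |ρ j| ≤ 1) (hσ : ∀ j, τ ≤ σ j) :
    (∫ g, |signSum w (fun j ↦ ⟪y j, g⟫)| ∂stdGaussian E) / 2 -
        2 * ∫ g, nearWeight w (2 * ε / τ) (fun j ↦ ⟪y j, g⟫) ∂stdGaussian E ≤
      ∫ g, localGain w ε (roundingSign ⟪v, g⟫) (fun j ↦ ⟪u j, g⟫)
        ∂(cond (stdGaussian E) {g | |⟪v, g⟫| < ε}) := by
  have hset : MeasurableSet {g : E | |⟪v, g⟫| < ε} := measurableSet_lt (by fun_prop) (by fun_prop)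
  have hy : Measurable fun g : E ↦ fun j ↦ ⟪y j, g⟫ := by fun_prop
  have habs : Integrable (fun g ↦ |signSum w (fun j ↦ ⟪y j, g⟫)|)
      (cond (stdGaussian E) {g | |⟪v, g⟫| < ε}) := (integrable_signSum_comp hw hy).abs
  have hcross : Integrable (fun g ↦ roundingSign ⟪v, g⟫ * signSum w (fun j ↦ ⟪y j, g⟫))
      (cond (stdGaussian E) {g | |⟪v, g⟫| < ε}) :=
    (integrable_signSum_comp hw hy).bdd_mul (c := 1)
      (measurable_roundingSign.comp (by fun_prop)).aestronglyMeasurable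
      (.of_forall fun g ↦ by rcases roundingSign_eq_one_or ⟪v, g⟫ with h | h <;> simp [h])
  have hhalf : Integrable (fun g ↦ (|signSum w (fun j ↦ ⟪y j, g⟫)| -
      roundingSign ⟪v, g⟫ * signSum w (fun j ↦ ⟪y j, g⟫)) / 2)
      (cond (stdGaussian E) {g | |⟪v, g⟫| < ε}) := (habs.sub hcross).div_const 2
  have hnear : Integrable (fun g ↦ 2 * nearWeight w (2 * ε / τ) (fun j ↦ ⟪y j, g⟫))
      (cond (stdGaussian E) {g | |⟪v, g⟫| < ε}) := (integrable_nearWeight_comp hw _ hy).const_mul 2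
  rw [← integral_comp_inner_cond hv horth hε (measurable_nearWeight w _),
    ← integral_comp_inner_cond hv horth hε (measurable_signSum w).abs,
    ← sub_zero (∫ g, |signSum w _| ∂_), ← integral_roundingSign_mul_signSum_cond w horth ε,
    ← integral_sub habs hcross, ← integral_div, ← integral_const_mul, ← integral_sub hhalf hnear]
  refine integral_mono_ae (hhalf.sub hnear)
    (integrable_localGain_comp hw ε (measurable_roundingSign.comp (by fun_prop)) (by fun_prop)) ?_
  filter_upwards [ae_cond_mem hset] with g hg
  refine half_abs_signSum_sub_nearWeight_le_localGain hw hτ hσ (roundingSign_eq_one_or _)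
    fun j ↦ ?_
  rw [hu j, inner_add_left, real_inner_smul_left, real_inner_smul_left, add_sub_cancel_right,
    abs_mul]
  exact (mul_le_of_le_one_left (abs_nonneg _) (hρ j)).trans (le_of_lt hg)

end CondExpectation

section Bound

variable {ι E : Type*} [Fintype ι] {w : ι → ℝ} [NormedAddCommGroup E] [InnerProductSpace ℝ E]
  [FiniteDimensional ℝ E] [MeasurableSpace E] [BorelSpace E] {τ : ℝ}

theorem le_integral_abs_signSum_inner {y : ι → E} (hcard : 2 ≤ Fintype.card ι)
    (hw : ∀ j, 0 ≤ w j) (hy : ∀ j, ‖y j‖ = 1) (hτ0 : 0 < τ) (hτ1 : τ ≤ 1 / 2)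
    (hoff : ∀ j k, j ≠ k → -(1 - τ) ≤ ⟪y j, y k⟫) :
    √τ / (24 * Real.pi * (Fintype.card ι * √(Real.log (Fintype.card ι)))) * ∑ j, w j ≤
      ∫ g, |signSum w (fun j ↦ ⟪y j, g⟫)| ∂stdGaussian E := by
  rcases (Finset.sum_nonneg fun j _ ↦ hw j : 0 ≤ ∑ j, w j).eq_or_lt' with hW | hW
  · rw [hW, mul_zero]
    exact integral_nonneg fun _ ↦ abs_nonneg _
  have hquad := sq_sum_div_le_sum_mul_arcsin_inner hcard hw hy hτ0 hτ1 hoff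
  refine le_of_mul_le_mul_left ?_ hW
  refine le_trans (le_of_eq ?_) ((mul_le_mul_of_nonneg_left hquad (by positivity)).trans
    (sum_arcsin_le_mul_integral_abs_signSum_inner hw hy))
  field

theorem le_integral_localGain_cond {v : E} {u : ι → E} (hcard : 2 ≤ Fintype.card ι)
    (hw : ∀ j, 0 ≤ w j) (hv : ‖v‖ = 1) (hu : ∀ j, ‖u j‖ = 1) (hτ : 0 < τ)
    (hvu : ∀ j, ⟪v, u j⟫ ∈ Set.Icc τ (1 - τ))
    (htri : ∀ j k, j ≠ k → ‖v + u k‖ ^ 2 ≤ ‖v - u j‖ ^ 2 + ‖u j + u k‖ ^ 2) {ε : ℝ}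
    (hε : 0 < ε) :
    (√τ / (48 * Real.pi * (Fintype.card ι * √(Real.log (Fintype.card ι)))) - 4 * ε / τ) *
        ∑ j, w j ≤
      ∫ g, localGain w ε (roundingSign ⟪v, g⟫) (fun j ↦ ⟪u j, g⟫)
        ∂(cond (stdGaussian E) {g | |⟪v, g⟫| < ε}) := by
  have hτ1 : τ ≤ 1 / 2 := by
    obtain ⟨j⟩ := Fintype.card_pos_iff.1 (two_pos.trans_le hcard)
    linarith [(hvu j).1, (hvu j).2]
  have habs (j : ι) : |⟪v, u j⟫| < 1 := abs_lt.2 ⟨by linarith [(hvu j).1], by linarith [(hvu j).2]⟩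
  have hy (j : ι) : ‖orthoUnit v (u j)‖ = 1 := norm_orthoUnit hv (hu j) (habs j)
  have hoff (j k : ι) (hjk : j ≠ k) : -(1 - τ) ≤ ⟪orthoUnit v (u j), orthoUnit v (u k)⟫ :=
    neg_one_sub_le_inner_orthoUnit hv hτ (hvu j) (hvu k)
      (inner_add_inner_sub_one_le_inner hv (hu j) (hu k) (htri j k hjk))
  have hsign := le_integral_abs_signSum_inner hcard hw hy hτ hτ1 hoff
  have hnear := integral_nearWeight_inner_le hw hy (δ := 2 * ε / τ) (by positivity)
  have hgain := integral_signSum_sub_nearWeight_le_integral_localGain_cond hw hv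
    (fun j ↦ inner_orthoUnit_right hv (u j)) hε hτ
    (fun j ↦ (inner_smul_add_sqrt_smul_orthoUnit (habs j)).symm) (fun j ↦ (habs j).le)
    (fun j ↦ le_sqrt_one_sub_sq hτ.le (hvu j))
  refine le_trans (le_of_eq_of_le ?_ (sub_le_sub (div_le_div_of_nonneg_right hsign zero_le_two)
    (mul_le_mul_of_nonneg_left hnear zero_le_two))) hgain
  ring

end Bound

/-! ### Location of the Goemans–Williamson minimizer -/

section GwRatio

variable {ρ : ℝ}

theorem gwRatio_sqrt_two_div_two_le : gwRatio (√2 / 2) ≤ 0.88 := by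
  have hsqrt : (1.41 : ℝ) ≤ √2 := Real.le_sqrt_of_sq_le (by norm_num)
  have harcsin : Real.arcsin (√2 / 2) = Real.pi / 4 := by
    rw [← Real.sin_pi_div_four,
      Real.arcsin_sin (by linarith [Real.pi_pos]) (by linarith [Real.pi_pos])]
  rw [gwRatio, harcsin, div_le_iff₀ (by linarith),
    show 2 / Real.pi * (Real.pi / 4) = 1 / 2 by field]
  linarith

theorem one_le_gwRatio (hρ₀ : -1 < ρ) (hρ₁ : ρ ≤ 0) : 1 ≤ gwRatio ρ := by
  have hjordan := Real.mul_le_sin (x := -Real.arcsin ρ)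
    (neg_nonneg.2 (Real.arcsin_nonpos.2 hρ₁)) (neg_le.1 (Real.neg_pi_div_two_le_arcsin ρ))
  rw [Real.sin_neg, Real.sin_arcsin hρ₀.le (by linarith)] at hjordan
  rw [gwRatio, le_div_iff₀ (by linarith)]
  linarith

theorem inv_one_add_le_gwRatio (hρ : 0 ≤ ρ) : (1 + ρ)⁻¹ ≤ gwRatio ρ := by
  have harcsin := Real.arcsin_nonneg.2 hρ
  rw [gwRatio, ← one_div]
  gcongr
  exact le_add_of_nonneg_right (by positivity)

theorem le_gwRatio_of_near_one (hρ : ρ ∈ Set.Icc 0.98 1) : 0.9 ≤ gwRatio ρ := by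
  have hpi := Real.pi_pos
  have hcos : Real.cos (Real.pi / 10) ≤ 0.98 :=
    (Real.cos_le_one_sub_mul_cos_sq (abs_le.2 ⟨by linarith, by linarith⟩)).trans_eq
      (by field_simp; norm_num)
  have harcsin : Real.pi / 2 - Real.pi / 10 ≤ Real.arcsin ρ := by
    rw [Real.le_arcsin_iff_sin_le' ⟨by linarith, by linarith⟩, Real.sin_pi_div_two_sub]
    exact hcos.trans hρ.1
  have hnum : 2 / Real.pi * (Real.pi / 2 - Real.pi / 10) ≤ 2 / Real.pi * Real.arcsin ρ := by
    gcongr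
  rw [show 2 / Real.pi * (Real.pi / 2 - Real.pi / 10) = 4 / 5 by field_simp; norm_num] at hnum
  rw [gwRatio, le_div_iff₀ (by linarith [hρ.1])]
  linarith [hρ.2]

theorem mem_Icc_of_isMinOn_gwRatio (hρ : ρ ∈ Set.Ioc (-1) 1)
    (hmin : IsMinOn gwRatio (Set.Ioc (-1) 1) ρ) : ρ ∈ Set.Icc 0.02 0.98 := by
  have hsqrt : √2 / 2 ≤ 1 := by linarith [Real.sqrt_two_lt_three_halves]
  have hle : gwRatio ρ ≤ 0.88 :=
    (isMinOn_iff.1 hmin _ ⟨by linarith [Real.sqrt_nonneg 2], hsqrt⟩).trans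
      gwRatio_sqrt_two_div_two_le
  constructor
  · by_contra! hlt
    rcases le_total ρ 0 with hneg | hpos
    · linarith [one_le_gwRatio hρ.1 hneg]
    · have hinv : 1 ≤ 0.88 * (1 + ρ) :=
        (inv_le_iff_one_le_mul₀ (by linarith)).1 ((inv_one_add_le_gwRatio hpos).trans hle)
      linarith
  · by_contra! hlt
    linarith [le_gwRatio_of_near_one ⟨hlt.le, hρ.2⟩]

end GwRatio

section Coordinates

variable {κ : Type*} [Fintype κ]

theorem integral_cond_stdGaussian_eq_integral_cond_pi {s : Set (EuclideanSpace ℝ κ)}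
    (hs : MeasurableSet s) (f : EuclideanSpace ℝ κ → ℝ) :
    ∫ g, f g ∂(cond (stdGaussian (EuclideanSpace ℝ κ)) s) =
      ∫ x, f (.toLp 2 x) ∂(cond (Measure.pi fun _ ↦ gaussianReal 0 1) (WithLp.toLp 2 ⁻¹' s)) := by
  rw [← map_pi_eq_stdGaussian, cond_map (by fun_prop) hs]
  exact (MeasurableEquiv.toLp 2 (κ → ℝ)).measurableEmbedding.integral_map f

theorem le_integral_localGain_cond_pi {ι : Type*} [Fintype ι] {w : ι → ℝ} {τ : ℝ} {v : κ → ℝ}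
    {u : ι → κ → ℝ} (hcard : 2 ≤ Fintype.card ι) (hw : ∀ j, 0 ≤ w j) (hv : ∑ i, v i ^ 2 = 1)
    (hu : ∀ j, ∑ i, u j i ^ 2 = 1) (hτ : 0 < τ)
    (hvu : ∀ j, ∑ i, v i * u j i ∈ Set.Icc τ (1 - τ))
    (htri : ∀ j k, j ≠ k → ∑ i, (v i + u k i) ^ 2 ≤
      ∑ i, (v i - u j i) ^ 2 + ∑ i, (u j i + u k i) ^ 2) {ε : ℝ} (hε : 0 < ε) :
    (√τ / (48 * Real.pi * (Fintype.card ι * √(Real.log (Fintype.card ι)))) - 4 * ε / τ) *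
        ∑ j, w j ≤
      ∫ x, localGain w ε (roundingSign (∑ i, v i * x i)) (fun j ↦ ∑ i, u j i * x i)
        ∂(cond (Measure.pi fun _ ↦ gaussianReal 0 1) {x | |∑ i, v i * x i| < ε}) := by
  have hinner (a b : κ → ℝ) : ⟪WithLp.toLp 2 a, WithLp.toLp 2 b⟫ = ∑ i, a i * b i := by
    simp [PiLp.inner_apply, mul_comm]
  have hnorm (a : κ → ℝ) : ‖WithLp.toLp 2 a‖ ^ 2 = ∑ i, a i ^ 2 :=
    EuclideanSpace.real_norm_sq_eq _
  have hunit {a : κ → ℝ} (ha : ∑ i, a i ^ 2 = 1) : ‖WithLp.toLp 2 a‖ = 1 :=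
    (sq_eq_sq₀ (norm_nonneg _) zero_le_one).1 (by rw [hnorm, ha, one_pow])
  have hgain := le_integral_localGain_cond (v := WithLp.toLp 2 v) (u := fun j ↦ .toLp 2 (u j))
    hcard hw (hunit hv) (fun j ↦ hunit (hu j)) hτ (fun j ↦ by rw [hinner]; exact hvu j)
    (fun j k hjk ↦ by
      rw [← WithLp.toLp_add, ← WithLp.toLp_sub, ← WithLp.toLp_add, hnorm, hnorm, hnorm]
      exact htri j k hjk) hε
  rw [integral_cond_stdGaussian_eq_integral_cond_pi
    (measurableSet_lt (by fun_prop) (by fun_prop))] at hgain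
  simpa only [hinner, Set.preimage_ofPred_eq] using hgain

end Coordinates

/-- Expected local gain: there are absolute constants `C, c > 0` such that for every
`d ≥ 2`, `ε = 1/(C d √(log d))`, and a vertex `i` with `d` neighbors, signs `b_{ij}`,
nonnegative weights `w_{ij}` (total `W_i`), and unit SDP vectors satisfying
`b_{ij}⟨v_i,v_j⟩ ∈ [ρ*-0.01, ρ*+0.01]` and the ℓ₂² triangle inequalities, the expected
local gain `Δ_i = max(0, 2 Σ_{j∈B_i} w_{ij} − W_i)` conditioned on `|⟨g,v_i⟩| < ε`
is at least `c·W_i/(d√(log d))`. -/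
theorem expected_local_gain :
    ∃ C c : ℝ, C > 0 ∧ c > 0 ∧ ∀ d : ℕ, 2 ≤ d → ∀ ε : ℝ,
      ε = 1 / (C * d * Real.sqrt (Real.log d)) →
      ∀ ρstar : ℝ, ρstar ∈ Set.Ioc (-1 : ℝ) 1 →
        (∀ ρ ∈ Set.Ioc (-1 : ℝ) 1, gwRatio ρstar ≤ gwRatio ρ) →
      ∀ n : ℕ, ∀ b w : Fin d → ℝ,
        (∀ j, b j = 1 ∨ b j = -1) → (∀ j, 0 ≤ w j) →
      ∀ (vi : Fin n → ℝ) (v : Fin d → Fin n → ℝ),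
        (∑ i, vi i ^ 2 = 1) → (∀ j, ∑ i, v j i ^ 2 = 1) →
        (∀ j, b j * ∑ i, vi i * v j i ∈ Set.Icc (ρstar - 0.01) (ρstar + 0.01)) →
        (∀ j k, j ≠ k → ∀ a aj ak : ℝ,
          (a = 1 ∨ a = -1) → (aj = 1 ∨ aj = -1) → (ak = 1 ∨ ak = -1) →
          (∑ i, (a * vi i - aj * v j i) ^ 2) + ∑ i, (aj * v j i - ak * v k i) ^ 2 ≥
            ∑ i, (a * vi i - ak * v k i) ^ 2) →
        (∫ g : Fin n → ℝ,
            max 0 (2 * (∑ j, if b j * (if 0 ≤ ∑ i, vi i * g i then (1 : ℝ) else -1) *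
                    (∑ i, v j i * g i) ≤ -ε then w j else 0) - ∑ j, w j)
          ∂(ProbabilityTheory.cond (Measure.pi fun _ : Fin n => gaussianReal 0 1)
              {g | |∑ i, vi i * g i| < ε})) ≥
          c * (∑ j, w j) / (d * Real.sqrt (Real.log d)) := by
  refine ⟨384000 * Real.pi, 1 / (960 * Real.pi), by positivity, by positivity,
    fun d hd ε hε ρstar hρ hmin n b w hb hw vi v hvi hv hvv htri ↦ ?_⟩
  have hlog : 0 < √(Real.log d) := Real.sqrt_pos.2 (Real.log_pos (by exact_mod_cast hd))
  obtain ⟨hρ₀, hρ₁⟩ := mem_Icc_of_isMinOn_gwRatio hρ (isMinOn_iff.2 hmin)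
  have hbsq (j : Fin d) : b j ^ 2 = 1 := sq_eq_one_iff.2 (hb j)
  have hsum (x : Fin n → ℝ) (j : Fin d) : ∑ i, b j * v j i * x i = b j * ∑ i, v j i * x i := by
    simp_rw [mul_assoc, Finset.mul_sum]
  have hsqrt : √(0.01 : ℝ) = 0.1 :=
    (Real.sqrt_eq_iff_mul_self_eq_of_pos (by norm_num)).2 (by norm_num)
  have hgain := le_integral_localGain_cond_pi (τ := 0.01) (v := vi) (u := fun j i ↦ b j * v j i)
    (ε := ε) (by simpa using hd) hw hvi (fun j ↦ by simp [mul_pow, hbsq, hv]) (by norm_num)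
    (fun j ↦ ?_) (fun j k hjk ↦ ?_) (by rw [hε]; positivity)
  · simp only [localGain, roundingSign, hsum, Fintype.card_fin, hsqrt] at hgain
    simp only [mul_assoc (b _), mul_left_comm (b _)]
    refine le_of_eq_of_le ?_ hgain
    rw [hε]
    field
  · simp_rw [mul_comm (vi _), hsum, mul_comm (v j _)]
    exact Set.Icc_subset_Icc (by linarith) (by linarith) (hvv j)
  · have hbk : -b k = 1 ∨ -b k = -1 := by simpa [neg_eq_iff_eq_neg, or_comm] using hb k
    simpa using htri j k hjk 1 (b j) (-b k) (.inl rfl) (hb j) hbk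
end
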